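/- arXiv:2503.04427 — 5 statements merged into one kernel-verified Lean document; each statement's English description precedes it below -/
import Mathlib

section
/- Let A ∈ ℂ^{n×n} be Hermitian positive definite with smallest eigenvalue λ_min and largest eigenvalue λ_max, let b ∈ ℂ^n with ‖b‖ = 1, let f be a Stieltjes function, and let m ≥ 1. Let V_m ∈ ℂ^{n×m} have orthonormal columns whose column space equals K_m(A,b), and let f_m := V_m f(V_m* A V_m) V_m* b be the Lanczos approximation. Then for every x ∈ K_m(A,b), ‖f(A)b − f_m‖ ≤ (1 + κ(A)²) ‖f(A)b − x‖, where κ(A) = λ_max/λ_min; in particular ‖f(A)b − f_m‖ ≤ (1 + κ(A)²) min_{x ∈ K_m(A,b)} ‖f(A)b − x‖. -/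
open MeasureTheory Matrix ComplexOrder

/-- A Stieltjes function: `f z = ∫ 1/(z+t) dμ(t)` for `z > 0`, for a positive Borel
measure `μ` on `[0,∞)` with `∫ 1/(1+t) dμ(t) < ∞`. -/
def IsStieltjes (f : ℝ → ℝ) : Prop :=
  ∃ μ : Measure ℝ,
    MeasureTheory.IntegrableOn (fun t => (1 + t)⁻¹) (Set.Ici 0) μ ∧
    ∀ z : ℝ, 0 < z → f z = ∫ t in Set.Ici (0 : ℝ), (z + t)⁻¹ ∂μ

/-- The Krylov subspace `K_m(A,b) = span{b, Ab, …, A^{m-1} b}`. -/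
noncomputable def Krylov {n : ℕ} (A : Matrix (Fin n) (Fin n) ℂ)
    (b : EuclideanSpace ℂ (Fin n)) (m : ℕ) : Submodule ℂ (EuclideanSpace ℂ (Fin n)) :=
  Submodule.span ℂ {v | ∃ i < m, v = Matrix.toEuclideanLin (A ^ i) b}

namespace Matrix.IsHermitian

variable {ι : Type*} [Fintype ι] [DecidableEq ι] {M : Matrix ι ι ℂ} (hM : M.IsHermitian)

theorem toEuclideanLin_cfc_eigenvectorBasis (f : ℝ → ℝ) (j : ι) :
    toEuclideanLin (hM.cfc f) (hM.eigenvectorBasis j) =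
      (f (hM.eigenvalues j) : ℂ) • hM.eigenvectorBasis j := by
  have : hM.cfc f *ᵥ (hM.eigenvectorBasis j).ofLp =
      (f (hM.eigenvalues j) : ℂ) • (hM.eigenvectorBasis j).ofLp := by
    rw [IsHermitian.cfc, Unitary.conjStarAlgAut_apply, ← mulVec_mulVec, ← mulVec_mulVec,
      hM.star_eigenvectorUnitary_mulVec, diagonal_mulVec_single, ← smul_eq_mul,
      Pi.single_smul', mulVec_smul, hM.eigenvectorUnitary_mulVec]
    rfl
  ext k
  simpa using congrFun this k

theorem inner_toEuclideanLin_cfc (f : ℝ → ℝ) (a b : EuclideanSpace ℂ ι) :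
    inner ℂ a (toEuclideanLin (hM.cfc f) b) =
      ∑ j, (f (hM.eigenvalues j) : ℂ) *
        (inner ℂ a (hM.eigenvectorBasis j) * inner ℂ (hM.eigenvectorBasis j) b) := by
  conv_lhs => rw [← hM.eigenvectorBasis.sum_repr' b]
  simp only [map_sum, map_smul, hM.toEuclideanLin_cfc_eigenvectorBasis, inner_sum,
    inner_smul_right]
  exact Finset.sum_congr rfl fun j _ => by ring

theorem inner_eigenvectorBasis_cfc (f : ℝ → ℝ) (b : EuclideanSpace ℂ ι) (i : ι) :
    inner ℂ (hM.eigenvectorBasis i) (toEuclideanLin (hM.cfc f) b) =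
      (f (hM.eigenvalues i) : ℂ) * inner ℂ (hM.eigenvectorBasis i) b := by
  simp [inner_toEuclideanLin_cfc, hM.eigenvectorBasis.inner_eq_ite]

theorem cfc_congr_eigenvalues {f g : ℝ → ℝ}
    (h : ∀ j, f (hM.eigenvalues j) = g (hM.eigenvalues j)) : hM.cfc f = hM.cfc g := by
  simp only [IsHermitian.cfc, show f ∘ hM.eigenvalues = g ∘ hM.eigenvalues from funext h]

theorem cfc_eval_eq_aeval (p : Polynomial ℝ) :
    hM.cfc (fun z => p.eval z) = Polynomial.aeval M p := by
  rw [← hM.cfc_eq, cfc_polynomial p M hM.isSelfAdjoint]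

end Matrix.IsHermitian

theorem toEuclideanLin_mul_apply {k l m : Type*} [Fintype l] [DecidableEq l] [Fintype m]
    [DecidableEq m] (M : Matrix k l ℂ) (N : Matrix l m ℂ) (v : EuclideanSpace ℂ m) :
    toEuclideanLin (M * N) v = toEuclideanLin M (toEuclideanLin N v) := by
  simp [toLpLin_apply]

section Krylov

variable {n m : ℕ} {A : Matrix (Fin n) (Fin n) ℂ} {b : EuclideanSpace ℂ (Fin n)}
  {V : Matrix (Fin n) (Fin m) ℂ}

theorem toEuclideanLin_pow_mem_Krylov {i : ℕ} (hi : i < m) :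
    toEuclideanLin (A ^ i) b ∈ Krylov A b m :=
  Submodule.subset_span ⟨i, hi, rfl⟩

/-- `V Vᴴ` fixes the range of a matrix `V` with orthonormal columns. -/
theorem toEuclideanLin_mul_conjTranspose_of_mem_range (hV : Vᴴ * V = 1)
    {v : EuclideanSpace ℂ (Fin n)} (hv : v ∈ LinearMap.range (toEuclideanLin V)) :
    toEuclideanLin V (toEuclideanLin Vᴴ v) = v := by
  obtain ⟨y, rfl⟩ := hv
  rw [← toEuclideanLin_mul_apply Vᴴ, hV, toLpLin_one, LinearMap.id_apply]

theorem conjTranspose_pow_apply (hV : Vᴴ * V = 1)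
    (hspan : LinearMap.range (toEuclideanLin V) = Krylov A b m) {i : ℕ} (hi : i ≤ m) :
    toEuclideanLin Vᴴ (toEuclideanLin (A ^ i) b) =
      toEuclideanLin ((Vᴴ * A * V) ^ i) (toEuclideanLin Vᴴ b) := by
  induction i with
  | zero => simp [toLpLin_one]
  | succ i ih =>
    have hmem := toEuclideanLin_mul_conjTranspose_of_mem_range hV
      (hspan ▸ toEuclideanLin_pow_mem_Krylov (A := A) (b := b) (Nat.lt_of_succ_le hi))
    rw [pow_succ', pow_succ', toEuclideanLin_mul_apply A, toEuclideanLin_mul_apply (Vᴴ * A * V),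
      ← ih (Nat.le_of_succ_le hi), toEuclideanLin_mul_apply (Vᴴ * A), hmem,
      toEuclideanLin_mul_apply Vᴴ]

theorem toEuclideanLin_aeval_apply {N : ℕ} {ι : Type*} [Fintype ι] [DecidableEq ι]
    (M : Matrix ι ι ℂ) (v : EuclideanSpace ℂ ι)
    {p : Polynomial ℝ} (hp : p.natDegree < N) :
    toEuclideanLin (Polynomial.aeval M p) v =
      ∑ i ∈ Finset.range N, (p.coeff i : ℂ) • toEuclideanLin (M ^ i) v := by
  rw [Polynomial.aeval_eq_sum_range' hp, map_sum, LinearMap.sum_apply]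
  refine Finset.sum_congr rfl fun i _ => ?_
  rw [← LinearMap.smul_apply, ← map_smul]
  rfl

theorem conjTranspose_aeval_apply (hV : Vᴴ * V = 1)
    (hspan : LinearMap.range (toEuclideanLin V) = Krylov A b m)
    {p : Polynomial ℝ} (hp : p.natDegree ≤ m) :
    toEuclideanLin Vᴴ (toEuclideanLin (Polynomial.aeval A p) b) =
      toEuclideanLin (Polynomial.aeval (Vᴴ * A * V) p) (toEuclideanLin Vᴴ b) := by
  rw [toEuclideanLin_aeval_apply _ _ (Nat.lt_succ_of_le hp),
    toEuclideanLin_aeval_apply _ _ (Nat.lt_succ_of_le hp), map_sum]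
  refine Finset.sum_congr rfl fun i hi => ?_
  rw [map_smul, conjTranspose_pow_apply hV hspan (Nat.le_of_lt_succ (Finset.mem_range.mp hi))]

/-- The Lanczos approximation is exact for polynomials of degree less than `m`. -/
theorem lanczos_aeval_eq (hV : Vᴴ * V = 1)
    (hspan : LinearMap.range (toEuclideanLin V) = Krylov A b m)
    {p : Polynomial ℝ} (hp : p.natDegree < m) :
    toEuclideanLin V (toEuclideanLin (Polynomial.aeval (Vᴴ * A * V) p) (toEuclideanLin Vᴴ b)) =
      toEuclideanLin (Polynomial.aeval A p) b := by
  rw [← conjTranspose_aeval_apply hV hspan hp.le]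
  refine toEuclideanLin_mul_conjTranspose_of_mem_range hV ?_
  rw [hspan, toEuclideanLin_aeval_apply _ _ hp]
  exact Submodule.sum_mem _ fun i hi =>
    Submodule.smul_mem _ _ (toEuclideanLin_pow_mem_Krylov (Finset.mem_range.mp hi))

end Krylov

/-- If the coefficients of `e` in an orthonormal basis are those of `w` times weights in
`[c, κ c]`, and `e - d` is orthogonal to `w`, then `‖e‖ ≤ κ ‖d‖`. -/
theorem norm_le_of_inner_eq_weight_mul {ι E : Type*} [Fintype ι] [NormedAddCommGroup E]
    [InnerProductSpace ℂ E] (u : OrthonormalBasis ι ℂ E) {e w d : E} {h : ι → ℝ} {c κ : ℝ}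
    (hκ : 0 ≤ κ) (hc : 0 ≤ c) (hch : ∀ i, c ≤ h i) (hhc : ∀ i, h i ≤ κ * c)
    (he : ∀ i, inner ℂ (u i) e = h i * inner ℂ (u i) w) (hort : inner ℂ w (e - d) = 0) :
    ‖e‖ ≤ κ * ‖d‖ := by
  have hnorm : ‖e‖ ^ 2 = ∑ i, h i ^ 2 * ‖inner ℂ (u i) w‖ ^ 2 := by
    rw [← u.sum_sq_norm_inner_right]
    refine Finset.sum_congr rfl fun i _ => ?_
    rw [he, norm_mul, mul_pow, Complex.norm_real, Real.norm_eq_abs, sq_abs]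
  have hwe : inner ℂ w e = ((∑ i, h i * ‖inner ℂ (u i) w‖ ^ 2 : ℝ) : ℂ) := by
    rw [← u.sum_inner_mul_inner, Complex.ofReal_sum]
    refine Finset.sum_congr rfl fun i _ => ?_
    rw [he, mul_left_comm, ← inner_conj_symm w, Complex.conj_mul']
    push_cast
    rfl
  have hwd : ∑ i, h i * ‖inner ℂ (u i) w‖ ^ 2 ≤ ‖w‖ * ‖d‖ := by
    have h1 : inner ℂ w e = inner ℂ w d := by
      rwa [inner_sub_right, sub_eq_zero] at hort
    calc _ ≤ ‖((∑ i, h i * ‖inner ℂ (u i) w‖ ^ 2 : ℝ) : ℂ)‖ := by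
            rw [Complex.norm_real]; exact Real.le_norm_self _
      _ = ‖inner ℂ w d‖ := by rw [← hwe, h1]
      _ ≤ _ := norm_inner_le_norm _ _
  have hupper : ‖e‖ ^ 2 ≤ κ * c * (‖w‖ * ‖d‖) := by
    refine le_trans ?_ (mul_le_mul_of_nonneg_left hwd (mul_nonneg hκ hc))
    rw [hnorm, Finset.mul_sum]
    refine Finset.sum_le_sum fun i _ => ?_
    rw [← mul_assoc, sq (h i)]
    have := hc.trans (hch i)
    gcongr
    exact hhc i
  have hlower : c * ‖w‖ ≤ ‖e‖ := by
    refine le_of_sq_le_sq ?_ (norm_nonneg _)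
    rw [hnorm, mul_pow, ← u.sum_sq_norm_inner_right w, Finset.mul_sum]
    refine Finset.sum_le_sum fun i _ => ?_
    gcongr
    exact hch i
  rcases (norm_nonneg e).eq_or_lt with h0 | h0
  · rw [← h0]; positivity
  · refine le_of_mul_le_mul_right ?_ h0
    calc ‖e‖ * ‖e‖ = ‖e‖ ^ 2 := (sq _).symm
      _ ≤ κ * ‖d‖ * (c * ‖w‖) := by linarith
      _ ≤ κ * ‖d‖ * ‖e‖ := by gcongr

section Stieltjes

variable {μ : Measure ℝ}

theorem integrableOn_inv_add (hμ : IntegrableOn (fun t => (1 + t)⁻¹) (Set.Ici 0) μ)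
    {z : ℝ} (hz : 0 < z) : IntegrableOn (fun t => (z + t)⁻¹) (Set.Ici 0) μ := by
  refine Integrable.mono' (hμ.const_mul (1 + z⁻¹)) (by fun_prop) ?_
  refine (ae_restrict_iff' measurableSet_Ici).mpr (ae_of_all _ fun t (ht : 0 ≤ t) => ?_)
  have h1 : 0 < z + t := by positivity
  have h2 : 0 < 1 + t := by positivity
  rw [Real.norm_of_nonneg (by positivity), ← div_eq_mul_inv, inv_eq_one_div,
    div_le_div_iff₀ h1 h2]
  have : z⁻¹ * z = 1 := inv_mul_cancel₀ hz.ne'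
  have : 0 ≤ z⁻¹ * t := by positivity
  nlinarith

theorem integrableOn_inv_prod_mul_inv_add {ι : Type*} [Fintype ι]
    (hμ : IntegrableOn (fun t => (1 + t)⁻¹) (Set.Ici 0) μ)
    {θ : ι → ℝ} (hθ : ∀ j, 0 < θ j) {z : ℝ} (hz : 0 < z) :
    IntegrableOn (fun t => (∏ j, (θ j + t))⁻¹ * (z + t)⁻¹) (Set.Ici 0) μ := by
  refine Integrable.mono' ((integrableOn_inv_add hμ hz).const_mul (∏ j, θ j)⁻¹) (by fun_prop) ?_
  refine (ae_restrict_iff' measurableSet_Ici).mpr (ae_of_all _ fun t (ht : 0 ≤ t) => ?_)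
  have hpos : 0 < ∏ j, θ j := Finset.prod_pos fun j _ => hθ j
  have hle : ∏ j, θ j ≤ ∏ j, (θ j + t) :=
    Finset.prod_le_prod (fun j _ => (hθ j).le) fun j _ => by linarith
  have hpos' := hpos.trans_le hle
  rw [Real.norm_of_nonneg (by positivity)]
  gcongr

/-- Integrating a linear identity between resolvent values against a Stieltjes measure. -/
theorem stieltjes_mul_sub_sum {ι : Type*} [Fintype ι]
    (hμ : IntegrableOn (fun t => (1 + t)⁻¹) (Set.Ici 0) μ) {f : ℝ → ℝ}
    (hf : ∀ z : ℝ, 0 < z → f z = ∫ t in Set.Ici (0 : ℝ), (z + t)⁻¹ ∂μ)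
    {θ : ι → ℝ} (hθ : ∀ j, 0 < θ j) {z : ℝ} (hz : 0 < z) {G : ℝ → ℝ} {β ω : ℂ} {γ : ι → ℂ}
    (h : ∀ t, 0 ≤ t → ((z + t)⁻¹ : ℝ) * β - ∑ j, ((θ j + t)⁻¹ : ℝ) * γ j = G t * ω) :
    f z * β - ∑ j, f (θ j) * γ j = ((∫ t in Set.Ici (0 : ℝ), G t ∂μ : ℝ) : ℂ) * ω := by
  have hint : ∀ {y : ℝ} (α : ℂ), 0 < y →
      IntegrableOn (fun t => (((y + t)⁻¹ : ℝ) : ℂ) * α) (Set.Ici 0) μ := fun α hy =>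
    (integrableOn_inv_add hμ hy).ofReal.mul_const α
  have hval : ∀ {y : ℝ} (α : ℂ), 0 < y →
      f y * α = ∫ t in Set.Ici (0 : ℝ), (((y + t)⁻¹ : ℝ) : ℂ) * α ∂μ := fun α hy => by
    rw [hf _ hy, integral_mul_const, integral_complex_ofReal]
  rw [hval β hz, Finset.sum_congr rfl fun j _ => hval (γ j) (hθ j),
    ← integral_finsetSum _ fun j _ => hint (γ j) (hθ j),
    ← integral_sub (hint β hz) (integrable_finsetSum _ fun j _ => hint (γ j) (hθ j)),
    ← integral_complex_ofReal, ← integral_mul_const]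
  exact setIntegral_congr_fun measurableSet_Ici fun t ht => h t ht

end Stieltjes

theorem inner_toEuclideanLin_right {k l : Type*} [Fintype k] [DecidableEq k] [Fintype l]
    [DecidableEq l] (V : Matrix k l ℂ) (u : EuclideanSpace ℂ k) (v : EuclideanSpace ℂ l) :
    inner ℂ u (toEuclideanLin V v) = inner ℂ (toEuclideanLin Vᴴ u) v := by
  rw [toEuclideanLin_conjTranspose_eq_adjoint, LinearMap.adjoint_inner_left]

open Polynomial in
/-- The error of the Lanczos approximation to the shifted system `(A + t) y = b` is a positive
multiple of `(A + t)⁻¹` applied to a vector independent of `t`. -/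
theorem inner_lanczos_resolvent_error {n m : ℕ} {A : Matrix (Fin n) (Fin n) ℂ}
    (hA : A.IsHermitian) {b : EuclideanSpace ℂ (Fin n)} {V : Matrix (Fin n) (Fin m) ℂ}
    (hm : 1 ≤ m) (hV : Vᴴ * V = 1)
    (hspan : LinearMap.range (toEuclideanLin V) = Krylov A b m)
    (hT : (Vᴴ * A * V).IsHermitian) (hθ : ∀ j, 0 < hT.eigenvalues j)
    (i : Fin n) (hi : 0 < hA.eigenvalues i) {t : ℝ} (ht : 0 ≤ t) :
    (((hA.eigenvalues i + t)⁻¹ : ℝ) : ℂ) * inner ℂ (hA.eigenvectorBasis i) b -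
      inner ℂ (hA.eigenvectorBasis i) (toEuclideanLin V
        (toEuclideanLin (hT.cfc fun z => (z + t)⁻¹) (toEuclideanLin Vᴴ b))) =
    (((∏ j, (hT.eigenvalues j + t))⁻¹ * (hA.eigenvalues i + t)⁻¹ : ℝ) : ℂ) *
      inner ℂ (hA.eigenvectorBasis i) (toEuclideanLin
        (aeval A (C ((-1) ^ m) * ∏ j, (X - C (hT.eigenvalues j)))) b) := by
  set P : ℝ[X] := ∏ j, (X - C (hT.eigenvalues j)) with hP
  set q : ℝ[X] := P /ₘ (X - C (-t)) with hq
  set g : ℝ := ∏ j, (hT.eigenvalues j + t) with hg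
  have hg0 : g ≠ 0 := (Finset.prod_pos fun j _ => by linarith [hθ j]).ne'
  have hPt : P.eval (-t) = (-1) ^ m * g := by
    have hconst : (-1 : ℝ) ^ m = ∏ _j : Fin m, -1 := by simp
    rw [hP, eval_prod, hg, hconst, ← Finset.prod_mul_distrib]
    refine Finset.prod_congr rfl fun j _ => ?_
    simp only [eval_sub, eval_X, eval_C]
    ring
  have hsplit : ∀ z, P.eval z = (-1) ^ m * g + (z + t) * q.eval z := fun z => by
    conv_lhs => rw [← modByMonic_add_div P (X - C (-t)), modByMonic_X_sub_C_eq_C_eval, hPt, ← hq]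
    simp only [eval_add, eval_mul, eval_sub, eval_X, eval_C, sub_neg_eq_add]
  have hPdeg : P.natDegree = m := by simp [hP, natDegree_prod_of_monic, monic_X_sub_C]
  have hqdeg : q.natDegree < m := by
    rw [hq, natDegree_divByMonic _ (monic_X_sub_C _), natDegree_X_sub_C, hPdeg]
    omega
  have hsgn : ((-1 : ℝ) ^ m) * (-1) ^ m = 1 := by rw [← mul_pow]; simp
  set s : ℝ[X] := C (-(-1) ^ m * g⁻¹) * q with hs
  have hsdeg : s.natDegree < m := (natDegree_C_mul_le _ _).trans_lt hqdeg
  have hres : hT.cfc (fun z => (z + t)⁻¹) = aeval (Vᴴ * A * V) s := by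
    rw [← hT.cfc_eval_eq_aeval]
    refine hT.cfc_congr_eigenvalues fun j => ?_
    have hroot : P.eval (hT.eigenvalues j) = 0 := by
      rw [hP, eval_prod]
      exact Finset.prod_eq_zero (Finset.mem_univ j) (by simp)
    have hne : hT.eigenvalues j + t ≠ 0 := by linarith [hθ j]
    have := hsplit (hT.eigenvalues j)
    rw [hroot] at this
    simp only [hs, eval_mul, eval_C]
    field_simp
    linear_combination -(-1) ^ m * this - g * hsgn
  have hne : hA.eigenvalues i + t ≠ 0 := by linarith
  rw [hres, lanczos_aeval_eq hV hspan hsdeg, ← hA.cfc_eval_eq_aeval, ← hA.cfc_eval_eq_aeval,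
    hA.inner_eigenvectorBasis_cfc, hA.inner_eigenvectorBasis_cfc, ← sub_mul, ← mul_assoc,
    ← Complex.ofReal_sub, ← Complex.ofReal_mul]
  congr 2
  simp only [hs, eval_mul, eval_C, hsplit]
  field_simp
  linear_combination - g * hsgn

/-- **Near instance optimality of Lanczos for Stieltjes functions**
(Theorem 3.1, bound (3.2)): if `A` is Hermitian positive definite, `‖b‖ = 1`, `f` is a
Stieltjes function and `V` has orthonormal columns spanning `K_m(A,b)`, then the Lanczos
approximation `f_m = V f(V* A V) V* b` satisfies
`‖f(A)b − f_m‖ ≤ (1 + κ(A)²) ‖f(A)b − x‖` for every `x ∈ K_m(A,b)`. -/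
theorem lanczos_near_instance_optimality_stieltjes
    {n m : ℕ} (hm : 1 ≤ m)
    (A : Matrix (Fin n) (Fin n) ℂ) (hA : A.IsHermitian) (hApd : A.PosDef)
    (lmin lmax : ℝ)
    (hlmin_mem : ∃ i, hA.eigenvalues i = lmin) (hlmin : ∀ i, lmin ≤ hA.eigenvalues i)
    (hlmax_mem : ∃ i, hA.eigenvalues i = lmax) (hlmax : ∀ i, hA.eigenvalues i ≤ lmax)
    (b : EuclideanSpace ℂ (Fin n)) (hb : ‖b‖ = 1)
    (f : ℝ → ℝ) (hf : IsStieltjes f)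
    (V : Matrix (Fin n) (Fin m) ℂ)
    (hVorth : Vᴴ * V = 1)
    (hVspan : LinearMap.range (Matrix.toEuclideanLin V) = Krylov A b m)
    (fm : EuclideanSpace ℂ (Fin n))
    (hfm : fm = Matrix.toEuclideanLin V
      (Matrix.toEuclideanLin ((Matrix.isHermitian_conjTranspose_mul_mul V hA).cfc f)
        (Matrix.toEuclideanLin Vᴴ b)))
    (x : EuclideanSpace ℂ (Fin n)) (hx : x ∈ Krylov A b m) :
    ‖Matrix.toEuclideanLin (hA.cfc f) b - fm‖ ≤
      (1 + (lmax / lmin) ^ 2) * ‖Matrix.toEuclideanLin (hA.cfc f) b - x‖ := by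
  obtain ⟨μ, hμ, hfμ⟩ := hf
  have hT := Matrix.isHermitian_conjTranspose_mul_mul V hA
  have hVinj : Function.Injective V.mulVec := fun y z hyz => by
    have := congrArg (Vᴴ *ᵥ ·) hyz
    simpa [mulVec_mulVec, hVorth] using this
  have hθ : ∀ j, 0 < hT.eigenvalues j := (hApd.conjTranspose_mul_mul_same hVinj).eigenvalues_pos
  have hpos : ∀ i, 0 < hA.eigenvalues i := hApd.eigenvalues_pos
  have hlmin0 : 0 < lmin := by
    obtain ⟨i, rfl⟩ := hlmin_mem
    exact hpos i
  have hle : lmin ≤ lmax := by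
    obtain ⟨i, rfl⟩ := hlmin_mem
    exact hlmax i
  have hlmax0 : 0 < lmax := hlmin0.trans_le hle
  let P : Polynomial ℝ := ∏ j, (Polynomial.X - Polynomial.C (hT.eigenvalues j))
  let w := toEuclideanLin (Polynomial.aeval A (Polynomial.C ((-1) ^ m) * P)) b
  let G : ℝ → ℝ → ℝ := fun z t => (∏ j, (hT.eigenvalues j + t))⁻¹ * (z + t)⁻¹
  let h : ℝ → ℝ := fun z => ∫ t in Set.Ici (0 : ℝ), G z t ∂μ
  have hGint : ∀ {z : ℝ}, 0 < z → IntegrableOn (G z) (Set.Ici 0) μ :=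
    fun hz => integrableOn_inv_prod_mul_inv_add hμ hθ hz
  have hg0 : ∀ {t : ℝ}, 0 ≤ t → 0 < (∏ j, (hT.eigenvalues j + t))⁻¹ := fun ht =>
    inv_pos.mpr (Finset.prod_pos fun j _ => by linarith [hθ j])
  have hcoef : ∀ i, inner ℂ (hA.eigenvectorBasis i) (toEuclideanLin (hA.cfc f) b - fm) =
      h (hA.eigenvalues i) * inner ℂ (hA.eigenvectorBasis i) w := fun i => by
    rw [inner_sub_right, hA.inner_eigenvectorBasis_cfc, hfm, inner_toEuclideanLin_right,
      hT.inner_toEuclideanLin_cfc]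
    refine stieltjes_mul_sub_sum hμ hfμ hθ (hpos i) fun t ht => ?_
    have := inner_lanczos_resolvent_error hA hm hVorth hVspan hT hθ i (hpos i) ht
    rwa [inner_toEuclideanLin_right, hT.inner_toEuclideanLin_cfc] at this
  have hort : ∀ v ∈ Krylov A b m, inner ℂ w v = 0 := fun v hv => by
    obtain ⟨y, rfl⟩ := hVspan ▸ hv
    have hdeg : (Polynomial.C ((-1) ^ m) * P).natDegree ≤ m :=
      (Polynomial.natDegree_C_mul_le _ _).trans_eq
        (by simp [P, Polynomial.natDegree_prod_of_monic, Polynomial.monic_X_sub_C])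
    have hzero : hT.cfc (fun z => (Polynomial.C ((-1) ^ m) * P).eval z) = hT.cfc 0 :=
      hT.cfc_congr_eigenvalues fun j => by
        rw [Polynomial.eval_mul, Polynomial.eval_prod,
          Finset.prod_eq_zero (Finset.mem_univ j) (by simp)]
        simp
    rw [inner_toEuclideanLin_right, conjTranspose_aeval_apply hVorth hVspan hdeg,
      ← hT.cfc_eval_eq_aeval, hzero]
    simp [← hT.cfc_eq]
  have hκ : 1 ≤ lmax / lmin := (one_le_div hlmin0).mpr hle
  refine (norm_le_of_inner_eq_weight_mul hA.eigenvectorBasis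
    (d := toEuclideanLin (hA.cfc f) b - x) (c := h lmax) (κ := lmax / lmin)
    (zero_le_one.trans hκ) ?_ (fun i => ?_) (fun i => ?_) hcoef ?_).trans ?_
  · exact setIntegral_nonneg measurableSet_Ici fun t (ht : 0 ≤ t) =>
      mul_nonneg (hg0 ht).le (by positivity)
  · refine setIntegral_mono_on (hGint hlmax0) (hGint (hpos i)) measurableSet_Ici
      fun t (ht : 0 ≤ t) => ?_
    have := hpos i
    have := hg0 ht
    dsimp only [G]
    gcongr
    exact hlmax i
  · rw [← integral_const_mul]
    refine setIntegral_mono_on (hGint (hpos i)) ((hGint hlmax0).const_mul _) measurableSet_Ici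
      fun t (ht : 0 ≤ t) => ?_
    dsimp only [G]
    rw [mul_left_comm]
    refine mul_le_mul_of_nonneg_left ?_ (hg0 ht).le
    have h1 : 0 < hA.eigenvalues i + t := by linarith [hpos i]
    have h2 : 0 < lmax + t := by positivity
    rw [← div_eq_mul_inv, div_div, inv_eq_one_div, div_le_div_iff₀ h1 (by positivity)]
    nlinarith [mul_le_mul_of_nonneg_left (hlmin i) hlmax0.le, mul_le_mul_of_nonneg_right hle ht]
  · rw [sub_sub_sub_cancel_left]
    refine hort _ (Submodule.sub_mem _ hx ?_)
    rw [hfm, ← hVspan]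
    exact LinearMap.mem_range_self _ _
  · gcongr
    nlinarith
end

section
/- Let A ∈ ℂ^{n×n} be Hermitian positive definite with smallest eigenvalue λ_min and largest eigenvalue λ_max, let b ∈ ℂ^n with ‖b‖ = 1, let g be a Stieltjes function and set f(z) := z·g(z), and let m ≥ 1. Let V_m = [v_1 | … | v_m] ∈ ℂ^{n×m} be a Lanczos basis for K_m(A,b), set β_{m+1} := ‖A v_m − V_m (V_m* A V_m) e_m^{(m)}‖, and let f_m := V_m f(V_m* A V_m) V_m* b. Then for every x ∈ K_m(A,b), ‖f(A)b − f_m‖ ≤ (1 + β_{m+1} λ_max/λ_min²) ‖f(A)b − x‖. -/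
open MeasureTheory Matrix ComplexOrder

section Algebra
open Polynomial

variable {K E F : Type*} [Field K] [AddCommGroup E] [Module K E] [AddCommGroup F] [Module K F]

/-- In a Krylov-type decomposition `A V = V T + r ℓ`, the powers of `A` and of the compression `T`
agree on the starting vector as long as the Krylov vectors stay in the range of `V`. -/
lemma pow_apply_eq_of_decomposition {A : Module.End K E} {T : Module.End K F}
    {V : F →ₗ[K] E} {W : E →ₗ[K] F} {ℓ : F → K} {r : E} {e : F} {m : ℕ}
    (hWV : ∀ y, W (V y) = y) (hWr : W r = 0) (hdec : ∀ y, A (V y) = V (T y) + ℓ y • r)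
    (hrange : ∀ k < m, ∃ y, (A ^ k) (V e) = V y) :
    ∀ k < m, (A ^ k) (V e) = V ((T ^ k) e) := by
  intro k
  induction k with
  | zero => intro _; simp
  | succ k ih =>
    intro hk
    obtain ⟨y, hy⟩ := hrange (k + 1) hk
    have h : V y = V ((T ^ (k + 1)) e) + ℓ ((T ^ k) e) • r := by
      rw [← hy, pow_succ', Module.End.mul_apply, ih (by omega), hdec, pow_succ',
        Module.End.mul_apply]
    have hW := congrArg W h
    rw [map_add, map_smul, hWr, hWV, hWV, smul_zero, add_zero] at hW
    rw [hy, hW]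

lemma aeval_apply_eq_of_natDegree_lt {A : Module.End K E} {T : Module.End K F}
    {V : F →ₗ[K] E} {e : F} {m : ℕ} (hpow : ∀ k < m, (A ^ k) (V e) = V ((T ^ k) e))
    {p : K[X]} (hp : p.natDegree < m) :
    aeval A p (V e) = V (aeval T p e) := by
  rw [aeval_eq_sum_range' hp, aeval_eq_sum_range' hp]
  simp only [LinearMap.sum_apply, LinearMap.smul_apply, map_sum, map_smul]
  exact Finset.sum_congr rfl fun k hk => by rw [hpow k (Finset.mem_range.1 hk)]

lemma aeval_apply_eq_smul_of_monic {A : Module.End K E} {T : Module.End K F}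
    {V : F →ₗ[K] E} {ℓ : F → K} {r : E} {e : F} {m : ℕ}
    (hdec : ∀ y, A (V y) = V (T y) + ℓ y • r)
    (hpow : ∀ k < m + 1, (A ^ k) (V e) = V ((T ^ k) e))
    {p : K[X]} (hp : p.Monic) (hdeg : p.natDegree = m + 1) (hpT : aeval T p = 0) :
    aeval A p (V e) = ℓ ((T ^ m) e) • r := by
  have hT : V (aeval T p e) = 0 := by simp [hpT]
  have hlead : p.coeff (m + 1) = 1 := by rw [← hdeg]; exact hp
  have hlast : (A ^ (m + 1)) (V e) = V ((T ^ (m + 1)) e) + ℓ ((T ^ m) e) • r := by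
    rw [pow_succ', Module.End.mul_apply, hpow m (by omega), hdec, pow_succ',
      Module.End.mul_apply]
  rw [aeval_eq_sum_range, hdeg, Finset.sum_range_succ, hlead] at hT ⊢
  simp only [LinearMap.add_apply, LinearMap.sum_apply, LinearMap.smul_apply, map_add, map_sum,
    map_smul, one_smul] at hT ⊢
  rw [hlast, ← add_assoc, Finset.sum_congr rfl
    fun k hk => by rw [hpow k (Finset.mem_range.1 hk)], hT, zero_add]

/-- A functional vanishing on the range of `V` sees `p(A) (A + t)⁻¹ b` as `p(-t) (A + t)⁻¹ b`. -/
lemma functional_resolvent_aeval {A R : Module.End K E} {T : Module.End K F}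
    {V : F →ₗ[K] E} {e : F} {m : ℕ} (hpow : ∀ k < m + 1, (A ^ k) (V e) = V ((T ^ k) e))
    {ψ : E →ₗ[K] K} (hψ : ∀ y, ψ (V y) = 0) {t : K} (hR : ∀ y, R (A y + t • y) = y)
    {p : K[X]} (hdeg : p.natDegree = m + 1) :
    ψ (R (aeval A p (V e))) = p.eval (-t) * ψ (R (V e)) := by
  set q := p /ₘ (X - C (-t)) with hq
  have hqdeg : q.natDegree < m + 1 := by
    rw [hq, natDegree_divByMonic _ (monic_X_sub_C _), hdeg, natDegree_X_sub_C]
    omega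
  have hp : p = (X - C (-t)) * q + C (p.eval (-t)) := by
    rw [← modByMonic_X_sub_C_eq_C_eval, add_comm]
    exact (modByMonic_add_div p (X - C (-t))).symm
  have hA : aeval A p (V e)
      = (A (aeval A q (V e)) + t • aeval A q (V e)) + p.eval (-t) • V e := by
    conv_lhs => rw [hp]
    simp [Module.algebraMap_end_apply]
  rw [hA, map_add, hR, map_add, aeval_apply_eq_of_natDegree_lt hpow hqdeg, hψ, map_smul, map_smul,
    zero_add, smul_eq_mul]

end Algebra

section Spectral

variable {ι : Type*} [Fintype ι] [DecidableEq ι] {M : Matrix ι ι ℂ}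

lemma toEuclideanLin_cfc_apply (hM : M.IsHermitian) (h : ℝ → ℝ) (u : EuclideanSpace ℂ ι) :
    toEuclideanLin (hM.cfc h) u =
      ∑ i, ((h (hM.eigenvalues i) : ℂ) * inner ℂ (hM.eigenvectorBasis i) u) •
        hM.eigenvectorBasis i := by
  have hbasis : ∀ j, toEuclideanLin (hM.cfc h) (hM.eigenvectorBasis j)
      = (h (hM.eigenvalues j) : ℂ) • hM.eigenvectorBasis j := by
    intro j
    rw [toLpLin_apply, IsHermitian.cfc, Unitary.conjStarAlgAut_apply]
    rw [← mulVec_mulVec, ← mulVec_mulVec, hM.star_eigenvectorUnitary_mulVec,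
      diagonal_mulVec_single]
    ext k
    simp [mul_comm]
  conv_lhs => rw [← hM.eigenvectorBasis.sum_repr' u]
  simp only [map_sum, map_smul, hbasis, smul_smul]
  exact Finset.sum_congr rfl fun i _ => by rw [mul_comm]

lemma toEuclideanLin_apply_eq_sum (hM : M.IsHermitian) (u : EuclideanSpace ℂ ι) :
    toEuclideanLin M u =
      ∑ i, ((hM.eigenvalues i : ℂ) * inner ℂ (hM.eigenvectorBasis i) u) •
        hM.eigenvectorBasis i := by
  have h : hM.cfc id = M := hM.spectral_theorem.symm
  conv_lhs => rw [← h, toEuclideanLin_cfc_apply]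
  simp

lemma cfc_apply_add_smul (hM : M.IsHermitian) (hpos : ∀ i, 0 < hM.eigenvalues i) {t : ℝ}
    (ht : 0 ≤ t) (u : EuclideanSpace ℂ ι) :
    toEuclideanLin (hM.cfc fun z => (z + t)⁻¹) (toEuclideanLin M u + (t : ℂ) • u) = u := by
  rw [toEuclideanLin_cfc_apply]
  conv_rhs => rw [← hM.eigenvectorBasis.sum_repr' u]
  refine Finset.sum_congr rfl fun i _ => ?_
  have hne : (hM.eigenvalues i : ℂ) + t ≠ 0 := by
    exact_mod_cast (add_pos_of_pos_of_nonneg (hpos i) ht).ne'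
  rw [toEuclideanLin_apply_eq_sum hM u, inner_add_right,
    hM.eigenvectorBasis.orthonormal.inner_right_fintype, inner_smul_right]
  congr 1
  push_cast
  field_simp

lemma add_smul_cfc_apply (hM : M.IsHermitian) (hpos : ∀ i, 0 < hM.eigenvalues i) {t : ℝ}
    (ht : 0 ≤ t) (u : EuclideanSpace ℂ ι) :
    toEuclideanLin M (toEuclideanLin (hM.cfc fun z => (z + t)⁻¹) u)
      + (t : ℂ) • toEuclideanLin (hM.cfc fun z => (z + t)⁻¹) u = u := by
  rw [toEuclideanLin_apply_eq_sum hM, toEuclideanLin_cfc_apply, Finset.smul_sum,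
    ← Finset.sum_add_distrib]
  conv_rhs => rw [← hM.eigenvectorBasis.sum_repr' u]
  refine Finset.sum_congr rfl fun i _ => ?_
  have hne : (hM.eigenvalues i : ℂ) + t ≠ 0 := by
    exact_mod_cast (add_pos_of_pos_of_nonneg (hpos i) ht).ne'
  rw [hM.eigenvectorBasis.orthonormal.inner_right_fintype, smul_smul, ← add_smul]
  congr 1
  push_cast
  field_simp

lemma inner_cfc_apply_self (hM : M.IsHermitian) (h : ℝ → ℝ) (u : EuclideanSpace ℂ ι) :
    inner ℂ u (toEuclideanLin (hM.cfc h) u)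
      = ((∑ i, h (hM.eigenvalues i) * ‖inner ℂ (hM.eigenvectorBasis i) u‖ ^ 2 : ℝ) : ℂ) := by
  rw [toEuclideanLin_cfc_apply, inner_sum]
  push_cast
  refine Finset.sum_congr rfl fun i _ => ?_
  rw [inner_smul_right, mul_assoc, ← inner_conj_symm u, Complex.mul_conj']

lemma mul_norm_sq_le_re_inner (hM : M.IsHermitian) {c : ℝ} (hc : ∀ i, c ≤ hM.eigenvalues i)
    (u : EuclideanSpace ℂ ι) : c * ‖u‖ ^ 2 ≤ (inner ℂ u (toEuclideanLin M u)).re := by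
  have h : hM.cfc id = M := hM.spectral_theorem.symm
  conv_rhs => rw [← h, inner_cfc_apply_self hM, Complex.ofReal_re]
  rw [← hM.eigenvectorBasis.sum_sq_norm_inner_right u, Finset.mul_sum]
  exact Finset.sum_le_sum fun i _ => mul_le_mul_of_nonneg_right (hc i) (by positivity)

lemma norm_resolvent_apply_le (hM : M.IsHermitian) {c : ℝ} (hc : 0 < c)
    (hle : ∀ i, c ≤ hM.eigenvalues i) {t : ℝ} (ht : 0 ≤ t) (u : EuclideanSpace ℂ ι) :
    ‖toEuclideanLin (hM.cfc fun z => (z + t)⁻¹) u‖ ≤ c⁻¹ * ‖u‖ := by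
  have h := add_smul_cfc_apply hM (fun i => hc.trans_le (hle i)) ht u
  set p := toEuclideanLin (hM.cfc fun z => (z + t)⁻¹) u
  have hre : (inner ℂ p u).re = (inner ℂ p (toEuclideanLin M p)).re + t * ‖p‖ ^ 2 := by
    conv_lhs => rw [← h, inner_add_right, inner_smul_right, inner_self_eq_norm_sq_to_K]
    simp [← Complex.ofReal_pow]
  have hcs : (inner ℂ p u).re ≤ ‖p‖ * ‖u‖ :=
    (Complex.re_le_norm _).trans (norm_inner_le_norm p u)
  have hcoer := mul_norm_sq_le_re_inner hM hle p
  have hp : ‖p‖ * (c * ‖p‖) ≤ ‖p‖ * ‖u‖ := by nlinarith [mul_nonneg ht (sq_nonneg ‖p‖)]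
  rw [le_inv_mul_iff₀ hc]
  rcases (norm_nonneg p).eq_or_lt with h0 | h0
  · rw [← h0, mul_zero]
    exact norm_nonneg u
  · exact le_of_mul_le_mul_left hp h0

lemma integrable_inv_add {μ : Measure ℝ}
    (hμ : IntegrableOn (fun t => (1 + t)⁻¹) (Set.Ici 0) μ) {z : ℝ} (hz : 0 < z) :
    IntegrableOn (fun t => (z + t)⁻¹) (Set.Ici 0) μ := by
  refine Integrable.mono' (hμ.const_mul (max 1 z⁻¹))
    (Measurable.aestronglyMeasurable (by fun_prop)) ?_
  filter_upwards [ae_restrict_mem measurableSet_Ici] with t ht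
  have ht : (0 : ℝ) ≤ t := ht
  have h1 : 1 ≤ max 1 z⁻¹ := le_max_left _ _
  have h2 : 1 ≤ max 1 z⁻¹ * z := by
    calc 1 = z⁻¹ * z := by field_simp
      _ ≤ _ := mul_le_mul_of_nonneg_right (le_max_right _ _) hz.le
  rw [Real.norm_of_nonneg (by positivity), ← div_eq_mul_inv, le_div_iff₀ (by positivity),
    inv_mul_le_iff₀ (by positivity)]
  nlinarith

/-- `f(M) u` for `f z = z g z` with `g` Stieltjes, as an integral of resolvents. -/
lemma integrableOn_and_cfc_apply_eq_integral {μ : Measure ℝ}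
    (hμ : IntegrableOn (fun t => (1 + t)⁻¹) (Set.Ici 0) μ) {g f : ℝ → ℝ}
    (hg : ∀ z : ℝ, 0 < z → g z = ∫ t in Set.Ici (0 : ℝ), (z + t)⁻¹ ∂μ)
    (hf : ∀ z : ℝ, f z = z * g z)
    (hM : M.IsHermitian) (hpos : ∀ i, 0 < hM.eigenvalues i) (u : EuclideanSpace ℂ ι) :
    IntegrableOn (fun t : ℝ => u - (t : ℂ) • toEuclideanLin (hM.cfc fun z => (z + t)⁻¹) u)
      (Set.Ici 0) μ ∧
    toEuclideanLin (hM.cfc f) u = ∫ t in Set.Ici (0 : ℝ),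
      (u - (t : ℂ) • toEuclideanLin (hM.cfc fun z => (z + t)⁻¹) u) ∂μ := by
  set c : ι → EuclideanSpace ℂ ι := fun i =>
    ((hM.eigenvalues i : ℂ) * inner ℂ (hM.eigenvectorBasis i) u) • hM.eigenvectorBasis i with hc
  have hint : ∀ i, IntegrableOn (fun t : ℝ => (hM.eigenvalues i + t)⁻¹ • c i) (Set.Ici 0) μ :=
    fun i => (integrable_inv_add hμ (hpos i)).smul_const _
  have hEq : Set.EqOn (fun t : ℝ => ∑ i, (hM.eigenvalues i + t)⁻¹ • c i)
      (fun t : ℝ => u - (t : ℂ) • toEuclideanLin (hM.cfc fun z => (z + t)⁻¹) u)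
      (Set.Ici 0) := by
    intro t ht
    have hres := eq_sub_of_add_eq (add_smul_cfc_apply hM hpos ht u)
    simp only
    rw [← hres, toEuclideanLin_apply_eq_sum hM, toEuclideanLin_cfc_apply]
    refine Finset.sum_congr rfl fun i _ => ?_
    rw [hM.eigenvectorBasis.orthonormal.inner_right_fintype, hc]
    simp only [← Complex.coe_smul, smul_smul]
    congr 1
    ring
  refine ⟨(integrable_finsetSum Finset.univ fun i _ => hint i).congr ?_, ?_⟩
  · filter_upwards [ae_restrict_mem measurableSet_Ici] with t ht
    exact hEq ht
  · rw [← setIntegral_congr_fun measurableSet_Ici hEq, integral_finsetSum _ fun i _ => hint i,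
      toEuclideanLin_cfc_apply]
    refine Finset.sum_congr rfl fun i _ => ?_
    rw [integral_smul_const, ← hg _ (hpos i), hf, hc]
    simp only [← Complex.coe_smul, smul_smul]
    congr 1
    push_cast
    ring

end Spectral

section Compression

variable {E F : Type*} [NormedAddCommGroup E] [InnerProductSpace ℂ E]
  [NormedAddCommGroup F] [InnerProductSpace ℂ F]

lemma norm_sub_projection_le {V : F →ₗ[ℂ] E} {W : E →ₗ[ℂ] F}
    (hadj : ∀ y x, inner ℂ (V y) x = inner ℂ y (W x)) (hWV : ∀ y, W (V y) = y) (x : E) (c : F) :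
    ‖x - V (W x)‖ ≤ ‖x - V c‖ := by
  have horth : inner ℂ (V (W x - c)) (x - V (W x)) = 0 := by
    rw [hadj, map_sub, hWV, sub_self, inner_zero_right]
  have hsum : x - V c = V (W x - c) + (x - V (W x)) := by
    rw [map_sub]; abel
  have hpyth := norm_add_sq_eq_norm_sq_add_norm_sq_of_inner_eq_zero _ _ horth
  rw [← hsum] at hpyth
  nlinarith [norm_nonneg (x - V (W x)), norm_nonneg (x - V c),
    mul_self_nonneg ‖V (W x - c)‖]

/-- If `t ↦ ⟪r, y t⟫` has constant phase, then an integral of vectors `t ⟪r, y t⟫ u t` with bounded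
`u` is controlled by the single number `⟪r, ∫ (b - t y t)⟫`. -/
lemma norm_compression_integral_sub_le [CompleteSpace E] [CompleteSpace F] {μ : Measure ℝ}
    {W : E →L[ℂ] F} {b r : E} {y : ℝ → E} {z u : ℝ → F} {c : ℝ} {ω : ℂ} {s : ℝ → ℝ}
    (hy : IntegrableOn (fun t : ℝ => b - (t : ℂ) • y t) (Set.Ici 0) μ)
    (hz : IntegrableOn (fun t : ℝ => W b - (t : ℂ) • z t) (Set.Ici 0) μ)
    (hdiff : ∀ t : ℝ, 0 ≤ t → z t = W (y t) + inner ℂ r (y t) • u t)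
    (hu : ∀ t : ℝ, 0 ≤ t → ‖u t‖ ≤ c) (hrb : inner ℂ r b = 0)
    (hs : ∀ t : ℝ, 0 ≤ t → 0 ≤ s t) (hphase : ∀ t : ℝ, 0 ≤ t → inner ℂ r (y t) = ω * s t) :
    ‖W (∫ t in Set.Ici (0 : ℝ), (b - (t : ℂ) • y t) ∂μ)
        - ∫ t in Set.Ici (0 : ℝ), (W b - (t : ℂ) • z t) ∂μ‖
      ≤ c * ‖inner ℂ r (∫ t in Set.Ici (0 : ℝ), (b - (t : ℂ) • y t) ∂μ)‖ := by
  have hinner : ∀ t : ℝ, 0 ≤ t → innerSL ℂ r (b - (t : ℂ) • y t) = -ω * ((t * s t : ℝ) : ℂ) := by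
    intro t ht
    rw [innerSL_apply_apply, inner_sub_right, inner_smul_right, hrb, hphase t ht]
    push_cast
    ring
  have hts : 0 ≤ ∫ t in Set.Ici (0 : ℝ), t * s t ∂μ :=
    setIntegral_nonneg measurableSet_Ici fun t ht => mul_nonneg ht (hs t ht)
  have hnorm : ‖inner ℂ r (∫ t in Set.Ici (0 : ℝ), (b - (t : ℂ) • y t) ∂μ)‖
      = ∫ t in Set.Ici (0 : ℝ), ‖innerSL ℂ r (b - (t : ℂ) • y t)‖ ∂μ := by
    rw [← innerSL_apply_apply ℂ, ← ContinuousLinearMap.integral_comp_comm _ hy,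
      setIntegral_congr_fun measurableSet_Ici hinner, integral_const_mul, integral_complex_ofReal,
      norm_mul, norm_neg, Complex.norm_of_nonneg hts, ← integral_const_mul]
    refine setIntegral_congr_fun measurableSet_Ici fun t ht => ?_
    rw [hinner t ht, norm_mul, norm_neg, Complex.norm_of_nonneg (mul_nonneg ht (hs t ht))]
  rw [hnorm, ← integral_const_mul, ← ContinuousLinearMap.integral_comp_comm _ hy,
    ← integral_sub (W.integrable_comp hy) hz]
  refine norm_integral_le_of_norm_le
    (((innerSL ℂ r).integrable_comp hy).norm.const_mul c) ?_
  filter_upwards [ae_restrict_mem measurableSet_Ici] with t ht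
  have hvec : W (b - (t : ℂ) • y t) - (W b - (t : ℂ) • z t)
      = -(innerSL ℂ r (b - (t : ℂ) • y t)) • u t := by
    rw [hinner t ht, hdiff t ht, hphase t ht, map_sub, map_smul]
    push_cast
    module
  rw [hvec, norm_smul, norm_neg, mul_comm]
  exact mul_le_mul_of_nonneg_right (hu t ht) (norm_nonneg _)

end Compression

section Lanczos

variable {n : ℕ}

lemma toEuclideanLin_mem_krylov_succ {A : Matrix (Fin n) (Fin n) ℂ}
    {b x : EuclideanSpace ℂ (Fin n)} {j : ℕ} (hx : x ∈ Krylov A b j) :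
    toEuclideanLin A x ∈ Krylov A b (j + 1) := by
  induction hx using Submodule.span_induction with
  | mem x hx =>
    obtain ⟨i, hi, rfl⟩ := hx
    refine Submodule.subset_span ⟨i + 1, by omega, ?_⟩
    rw [pow_succ', toLpLin_mul_same, LinearMap.comp_apply]
  | zero => simp
  | add x y _ _ hx hy => rw [map_add]; exact add_mem hx hy
  | smul c x _ hx => rw [map_smul]; exact Submodule.smul_mem _ c hx

lemma exists_eq_of_mem_krylov {m : ℕ} {A : Matrix (Fin n) (Fin n) ℂ}
    {b : EuclideanSpace ℂ (Fin n)} {V : Matrix (Fin n) (Fin m) ℂ}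
    (hVnested : ∀ j : ℕ, 1 ≤ j → j ≤ m →
      Submodule.span ℂ {v | ∃ i : Fin m, (i : ℕ) < j ∧
        v = toEuclideanLin V (EuclideanSpace.single i 1)} = Krylov A b j)
    {j : ℕ} (hj : 1 ≤ j) (hjm : j ≤ m) {x : EuclideanSpace ℂ (Fin n)} (hx : x ∈ Krylov A b j) :
    ∃ c, x = toEuclideanLin V c := by
  rw [← hVnested j hj hjm] at hx
  have hle : Submodule.span ℂ {v | ∃ i : Fin m, (i : ℕ) < j ∧
      v = toEuclideanLin V (EuclideanSpace.single i 1)}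
      ≤ LinearMap.range (toEuclideanLin V) := by
    rw [Submodule.span_le]
    rintro _ ⟨i, -, rfl⟩
    exact ⟨_, rfl⟩
  obtain ⟨c, hc⟩ := hle hx
  exact ⟨c, hc.symm⟩

/-- The Lanczos relation `A V = V (V* A V) + r eₘ*`, with residual `r = A vₘ - V (V* A V) eₘ`. -/
lemma lanczos_relation {k : ℕ} {A : Matrix (Fin n) (Fin n) ℂ}
    {b : EuclideanSpace ℂ (Fin n)} {V : Matrix (Fin n) (Fin (k + 1)) ℂ} (hVorth : Vᴴ * V = 1)
    (hVnested : ∀ j : ℕ, 1 ≤ j → j ≤ k + 1 →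
      Submodule.span ℂ {v | ∃ i : Fin (k + 1), (i : ℕ) < j ∧
        v = toEuclideanLin V (EuclideanSpace.single i 1)} = Krylov A b j)
    (y : EuclideanSpace ℂ (Fin (k + 1))) :
    toEuclideanLin A (toEuclideanLin V y) = toEuclideanLin V (toEuclideanLin (Vᴴ * A * V) y)
      + y (Fin.last k) •
        (toEuclideanLin A (toEuclideanLin V (EuclideanSpace.single (Fin.last k) 1))
          - toEuclideanLin V
            (toEuclideanLin (Vᴴ * A * V) (EuclideanSpace.single (Fin.last k) 1))) := by
  set r := toEuclideanLin A (toEuclideanLin V (EuclideanSpace.single (Fin.last k) 1))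
        - toEuclideanLin V (toEuclideanLin (Vᴴ * A * V) (EuclideanSpace.single (Fin.last k) 1))
    with hr
  suffices h : toEuclideanLin A ∘ₗ toEuclideanLin V
      = toEuclideanLin V ∘ₗ toEuclideanLin (Vᴴ * A * V)
        + (EuclideanSpace.proj (𝕜 := ℂ) (Fin.last k)).toLinearMap.smulRight r from
    LinearMap.congr_fun h y
  refine (EuclideanSpace.basisFun (Fin (k + 1)) ℂ).toBasis.ext fun i => ?_
  simp only [OrthonormalBasis.coe_toBasis, EuclideanSpace.basisFun_apply, LinearMap.comp_apply,
    LinearMap.add_apply, LinearMap.smulRight_apply, ContinuousLinearMap.coe_coe,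
    PiLp.proj_apply]
  rcases eq_or_ne i (Fin.last k) with rfl | hi
  · rw [PiLp.single_apply, if_pos rfl, one_smul, hr]
    abel
  · have hik : (i : ℕ) < k := Fin.val_lt_last hi
    have hmem : toEuclideanLin V (EuclideanSpace.single i 1) ∈ Krylov A b (i + 1) := by
      rw [← hVnested (i + 1) (by omega) (by omega)]
      exact Submodule.subset_span ⟨i, by omega, rfl⟩
    obtain ⟨c, hc⟩ := exists_eq_of_mem_krylov hVnested (by omega) (by omega)
      (toEuclideanLin_mem_krylov_succ hmem)
    rw [PiLp.single_apply, if_neg hi.symm, zero_smul, add_zero, Matrix.mul_assoc, toLpLin_mul_same,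
      LinearMap.comp_apply, toLpLin_mul_same, LinearMap.comp_apply, hc,
      ← LinearMap.comp_apply (toEuclideanLin Vᴴ),
      ← toLpLin_mul_same, hVorth, toLpLin_one, LinearMap.id_apply]

/-- The numbers `⟪r, (A + t)⁻¹ b⟫`, `t ≥ 0`, have a common phase. -/
lemma exists_phase_inner_resolvent {k : ℕ} {A : Matrix (Fin n) (Fin n) ℂ} (hA : A.IsHermitian)
    (hApos : ∀ i, 0 < hA.eigenvalues i)
    {T : Matrix (Fin (k + 1)) (Fin (k + 1)) ℂ} (hT : T.IsHermitian)
    (hTpos : ∀ i, 0 < hT.eigenvalues i)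
    {V : EuclideanSpace ℂ (Fin (k + 1)) →ₗ[ℂ] EuclideanSpace ℂ (Fin n)}
    {ℓ : EuclideanSpace ℂ (Fin (k + 1)) → ℂ} {r : EuclideanSpace ℂ (Fin n)}
    {e : EuclideanSpace ℂ (Fin (k + 1))}
    (hdec : ∀ y, toEuclideanLin A (V y) = V (toEuclideanLin T y) + ℓ y • r)
    (hrV : ∀ y, inner ℂ r (V y) = 0)
    (hpow : ∀ j < k + 1, ((toEuclideanLin A) ^ j) (V e) = V (((toEuclideanLin T) ^ j) e)) :
    ∃ (ω : ℂ) (s : ℝ → ℝ), ∀ t : ℝ, 0 ≤ t → 0 ≤ s t ∧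
      inner ℂ r (toEuclideanLin (hA.cfc fun z => (z + t)⁻¹) (V e)) = ω * s t := by
  set γ := ℓ (((toEuclideanLin T) ^ k) e)
  set q : ℝ → ℝ := fun t =>
    ∑ i, (hA.eigenvalues i + t)⁻¹ * ‖inner ℂ (hA.eigenvectorBasis i) r‖ ^ 2
  set d : ℝ → ℝ := fun t => ∏ i, (t + hT.eigenvalues i)
  refine ⟨(-1) ^ (k + 1) * γ, fun t => q t / d t, fun t ht => ?_⟩
  have hd : 0 < d t := Finset.prod_pos fun i _ => add_pos_of_nonneg_of_pos ht (hTpos i)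
  have hq : 0 ≤ q t := Finset.sum_nonneg fun i _ =>
    mul_nonneg (inv_nonneg.2 (add_nonneg (hApos i).le ht)) (by positivity)
  refine ⟨div_nonneg hq hd.le, ?_⟩
  have hdeg : T.charpoly.natDegree = k + 1 := by simp [charpoly_natDegree_eq_dim]
  have hpT : Polynomial.aeval (toEuclideanLin T) T.charpoly = 0 := by
    have h := Polynomial.aeval_algHom_apply (toLpLinAlgEquiv (R := ℂ) (n := Fin (k + 1)) 2).toAlgHom
      T T.charpoly
    rw [aeval_self_charpoly, map_zero] at h
    exact h
  have heval : T.charpoly.eval (-(t : ℂ)) = (-1) ^ (k + 1) * (d t : ℂ) := by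
    rw [hT.charpoly_eq, Polynomial.eval_prod]
    push_cast [d]
    have hneg : ∀ i, (Polynomial.X - Polynomial.C (hT.eigenvalues i : ℂ)).eval (-(t : ℂ))
        = (-1) * ((t : ℂ) + hT.eigenvalues i) := by
      intro i; simp; ring
    refine (Finset.prod_congr rfl fun i _ => hneg i).trans ?_
    rw [Finset.prod_mul_distrib]
    simp
  have hmain := functional_resolvent_aeval (ψ := (innerSL ℂ r).toLinearMap) hpow hrV
    (R := toEuclideanLin (hA.cfc fun z => (z + t)⁻¹)) (t := (t : ℂ))
    (cfc_apply_add_smul hA hApos ht) hdeg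
  rw [aeval_apply_eq_smul_of_monic hdec hpow T.charpoly_monic hdeg hpT, map_smul, map_smul,
    heval] at hmain
  simp only [ContinuousLinearMap.coe_coe, innerSL_apply_apply, smul_eq_mul] at hmain
  rw [inner_cfc_apply_self] at hmain
  have hdC : (d t : ℂ) ≠ 0 := by exact_mod_cast hd.ne'
  have hone : ((-1 : ℂ) ^ (k + 1)) * (-1) ^ (k + 1) = 1 := by
    rw [← mul_pow]; simp
  change γ * (q t : ℂ) = _ at hmain
  push_cast
  rw [mul_assoc, mul_div_assoc', hmain, mul_assoc, mul_div_assoc', ← mul_assoc, hone, one_mul,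
    mul_div_cancel_left₀ _ hdC]

end Lanczos

/-- **Near instance optimality of Lanczos for `z` times Stieltjes functions** (Theorem 4.1 with bound (3.1))
(Theorem 3.1, bound (3.1)): for a Lanczos basis `V = [v₁ | … | v_m]` of `K_m(A,b)`
(orthonormal columns, `v₁ = b`, nested Krylov spans) and
`β_{m+1} = ‖A v_m − V (V* A V) e_m‖`, the Lanczos approximation
`f_m = V f(V* A V) V* b` satisfies
`‖f(A)b − f_m‖ ≤ (1 + β_{m+1} λ_max/λ_min²) ‖f(A)b − x‖` for every `x ∈ K_m(A,b)`. -/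
theorem lanczos_near_instance_optimality_zStieltjes_beta
    {n m : ℕ} (hm : 1 ≤ m)
    (A : Matrix (Fin n) (Fin n) ℂ) (hA : A.IsHermitian) (hApd : A.PosDef)
    (lmin lmax : ℝ)
    (hlmin_mem : ∃ i, hA.eigenvalues i = lmin) (hlmin : ∀ i, lmin ≤ hA.eigenvalues i)
    (hlmax_mem : ∃ i, hA.eigenvalues i = lmax) (hlmax : ∀ i, hA.eigenvalues i ≤ lmax)
    (b : EuclideanSpace ℂ (Fin n)) (hb : ‖b‖ = 1)
    (g : ℝ → ℝ) (hg : IsStieltjes g) (f : ℝ → ℝ) (hf : ∀ z : ℝ, f z = z * g z)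
    (V : Matrix (Fin n) (Fin m) ℂ)
    -- the columns of `V` are orthonormal
    (hVorth : Vᴴ * V = 1)
    -- the first column of `V` is `b`
    (hVfirst : Matrix.toEuclideanLin V (EuclideanSpace.single ⟨0, hm⟩ 1) = b)
    -- for every `1 ≤ j ≤ m`, the first `j` columns of `V` span `K_j(A,b)`
    (hVnested : ∀ j : ℕ, 1 ≤ j → j ≤ m →
      Submodule.span ℂ {v | ∃ i : Fin m, (i : ℕ) < j ∧
        v = Matrix.toEuclideanLin V (EuclideanSpace.single i 1)} = Krylov A b j)
    -- `β_{m+1} = ‖A v_m − V (V* A V) e_m‖`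
    (β : ℝ)
    (hβ : β = ‖Matrix.toEuclideanLin A
        (Matrix.toEuclideanLin V (EuclideanSpace.single ⟨m - 1, by omega⟩ 1)) -
      Matrix.toEuclideanLin V
        (Matrix.toEuclideanLin (Vᴴ * A * V) (EuclideanSpace.single ⟨m - 1, by omega⟩ 1))‖)
    (fm : EuclideanSpace ℂ (Fin n))
    (hfm : fm = Matrix.toEuclideanLin V
      (Matrix.toEuclideanLin ((Matrix.isHermitian_conjTranspose_mul_mul V hA).cfc f)
        (Matrix.toEuclideanLin Vᴴ b)))
    (x : EuclideanSpace ℂ (Fin n)) (hx : x ∈ Krylov A b m) :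
    ‖Matrix.toEuclideanLin (hA.cfc f) b - fm‖ ≤
      (1 + β * lmax / lmin ^ 2) * ‖Matrix.toEuclideanLin (hA.cfc f) b - x‖ := by
  obtain ⟨k, rfl⟩ : ∃ k, m = k + 1 := ⟨m - 1, by omega⟩
  obtain ⟨μ, hμ, hgμ⟩ := hg
  have hApos : ∀ i, 0 < hA.eigenvalues i := hA.posDef_iff_eigenvalues_pos.1 hApd
  have hlmin_pos : 0 < lmin := by obtain ⟨i, rfl⟩ := hlmin_mem; exact hApos i
  have hle : lmin ≤ lmax := by obtain ⟨i, rfl⟩ := hlmax_mem; exact hlmin i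
  set T := Vᴴ * A * V with hTdef
  have hT : T.IsHermitian := isHermitian_conjTranspose_mul_mul V hA
  set v := toEuclideanLin V with hv
  set w := toEuclideanLin Vᴴ with hw
  set em : EuclideanSpace ℂ (Fin (k + 1)) := EuclideanSpace.single (Fin.last k) 1 with hem
  set r := toEuclideanLin A (v em) - v (toEuclideanLin T em) with hr
  have hβr : β = ‖r‖ := hβ
  have hadj : ∀ y z, inner ℂ (v y) z = inner ℂ y (w z) := by
    intro y z
    rw [hw, toEuclideanLin_conjTranspose_eq_adjoint, LinearMap.adjoint_inner_right]
  have hwv : ∀ y, w (v y) = y := by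
    intro y
    rw [hw, hv, ← LinearMap.comp_apply, ← toLpLin_mul_same, hVorth, toLpLin_one,
      LinearMap.id_apply]
  have hTw : ∀ y, toEuclideanLin T y = w (toEuclideanLin A (v y)) := by
    intro y
    rw [hTdef, toLpLin_mul_same, toLpLin_mul_same, LinearMap.comp_apply, LinearMap.comp_apply]
  have hdec : ∀ y : EuclideanSpace ℂ (Fin (k + 1)),
      toEuclideanLin A (v y) = v (toEuclideanLin T y) + y (Fin.last k) • r :=
    lanczos_relation hVorth hVnested
  have hwr : w r = 0 := by rw [hr, map_sub, hwv, hTw, sub_self]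
  have hrv : ∀ y, inner ℂ r (v y) = 0 := by
    intro y
    rw [← inner_conj_symm, hadj, hwr, inner_zero_right, map_zero]
  have hnormv : ∀ y, ‖v y‖ = ‖y‖ := by
    intro y
    rw [@norm_eq_sqrt_re_inner ℂ, @norm_eq_sqrt_re_inner ℂ, hadj, hwv]
  have hAsymm : ∀ y z, inner ℂ (toEuclideanLin A y) z = inner ℂ y (toEuclideanLin A z) :=
    isSymmetric_toEuclideanLin_iff.2 hA
  have hcoer : ∀ y, lmin * ‖y‖ ^ 2 ≤ (inner ℂ y (toEuclideanLin T y)).re := by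
    intro y
    rw [hTw, ← hadj, ← hnormv]
    exact mul_norm_sq_le_re_inner hA hlmin (v y)
  have hTlow : ∀ i, lmin ≤ hT.eigenvalues i := by
    intro i
    have h := hcoer (hT.eigenvectorBasis i)
    rw [toEuclideanLin_apply_eq_sum hT, hT.eigenvectorBasis.orthonormal.inner_right_fintype] at h
    simpa only [OrthonormalBasis.norm_eq_one, OrthonormalBasis.inner_eq_one, one_pow, mul_one,
      Complex.ofReal_re] using h
  have hTpos : ∀ i, 0 < hT.eigenvalues i := fun i => hlmin_pos.trans_le (hTlow i)
  have hvb : v (EuclideanSpace.single 0 1) = b := hVfirst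
  obtain ⟨ω, s, hs⟩ := exists_phase_inner_resolvent (e := EuclideanSpace.single 0 1) hA hApos hT
    hTpos hdec hrv (pow_apply_eq_of_decomposition hwv hwr hdec fun j hj => by
      rw [hvb, ← toLpLin_pow]
      exact exists_eq_of_mem_krylov hVnested hm le_rfl (Submodule.subset_span ⟨j, hj, rfl⟩))
  rw [hvb] at hs
  obtain ⟨hyint, hFA⟩ := integrableOn_and_cfc_apply_eq_integral hμ hgμ hf hA hApos b
  obtain ⟨hzint, hFT⟩ := integrableOn_and_cfc_apply_eq_integral hμ hgμ hf hT hTpos (w b)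
  have hwA : ∀ y, w (toEuclideanLin A y) = toEuclideanLin T (w y) + inner ℂ r y • em := by
    intro y
    refine ext_inner_left ℂ fun z => ?_
    rw [← hadj, ← hAsymm, hdec, inner_add_left, hadj, inner_smul_left, inner_add_right,
      inner_smul_right, isSymmetric_toEuclideanLin_iff.2 hT, hem, EuclideanSpace.inner_single_right]
    ring
  have hbound : ‖w (toEuclideanLin (hA.cfc f) b) - toEuclideanLin (hT.cfc f) (w b)‖
      ≤ lmin⁻¹ * ‖inner ℂ r (toEuclideanLin (hA.cfc f) b)‖ := by
    rw [hFA, hFT]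
    refine norm_compression_integral_sub_le (W := w.toContinuousLinearMap)
      (u := fun t => toEuclideanLin (hT.cfc fun z => (z + t)⁻¹) em) hyint hzint
      (fun t ht => ?_) (fun t ht => ?_) (by rw [← hvb]; exact hrv _)
      (fun t ht => (hs t ht).1) (fun t ht => (hs t ht).2)
    · have h := cfc_apply_add_smul hT hTpos ht
        (w (toEuclideanLin (hA.cfc fun z => (z + t)⁻¹) b))
      have hb' := congrArg w (add_smul_cfc_apply hA hApos ht b)
      rw [map_add, map_smul, hwA] at hb'
      simp only [LinearMap.coe_toContinuousLinearMap']
      conv_lhs => rw [← hb', add_right_comm, map_add, h, map_smul]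
    · have h := norm_resolvent_apply_le hT hlmin_pos hTlow ht em
      rwa [hem, PiLp.norm_single, norm_one, mul_one] at h
  obtain ⟨c, rfl⟩ := exists_eq_of_mem_krylov hVnested hm le_rfl hx
  set Fb := toEuclideanLin (hA.cfc f) b
  have hrF : ‖inner ℂ r Fb‖ ≤ β * ‖Fb - v c‖ := by
    have h : inner ℂ r Fb = inner ℂ r (Fb - v c) := by rw [inner_sub_right, hrv, sub_zero]
    rw [h, hβr]
    exact norm_inner_le_norm _ _
  have hconst : lmin⁻¹ * β ≤ β * lmax / lmin ^ 2 := by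
    have hβ0 : 0 ≤ β := hβr ▸ norm_nonneg r
    rw [inv_mul_eq_div, div_le_div_iff₀ hlmin_pos (by positivity)]
    nlinarith [mul_nonneg hβ0 hlmin_pos.le]
  have hproj := norm_sub_projection_le hadj hwv Fb c
  calc ‖Fb - fm‖ = ‖(Fb - v (w Fb)) + v (w Fb - toEuclideanLin (hT.cfc f) (w b))‖ := by
        rw [hfm, map_sub]; congr 1; abel
    _ ≤ ‖Fb - v (w Fb)‖ + ‖v (w Fb - toEuclideanLin (hT.cfc f) (w b))‖ := norm_add_le _ _
    _ ≤ ‖Fb - v c‖ + lmin⁻¹ * (β * ‖Fb - v c‖) := by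
        rw [hnormv]
        exact add_le_add hproj (hbound.trans (by gcongr))
    _ = ‖Fb - v c‖ + lmin⁻¹ * β * ‖Fb - v c‖ := by ring
    _ ≤ ‖Fb - v c‖ + β * lmax / lmin ^ 2 * ‖Fb - v c‖ := by gcongr
    _ = _ := by ring
end

section
/- In the block matrix setup, for every t ≥ 0 it holds that d(t) ≠ 0 and, writing (T + tI)⁻¹ e_1^{(m+k)} = (x(t); z(t)) with x(t) ∈ ℝ^m and z(t) ∈ ℝ^k, one has x(t) − (T₁ + tI)⁻¹ e_1^{(m)} = −(δ(t) ε(t) / d(t)) · (T₁ + tI)⁻¹ e_m^{(m)}. -/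
open Matrix

namespace Matrix

variable {K p q : Type*} [Field K] [Fintype p] [Fintype q] [DecidableEq p] [DecidableEq q]

/-- Action of a block matrix whose off-diagonal blocks have a single nonzero entry. -/
theorem fromBlocks_single_mulVec_elim (A : Matrix p p K) (B : Matrix q q K) (a : p) (b : q)
    (β : K) (v : p → K) (w : q → K) :
    fromBlocks A (single a b β) (single b a β) B *ᵥ Sum.elim v w =
      Sum.elim (A *ᵥ v + (β * w b) • Pi.single a 1) ((β * v a) • Pi.single b 1 + B *ᵥ w) := by
  rw [fromBlocks_mulVec]
  congr 1 <;> ext i <;> simp [single_mulVec, Function.update_apply, Pi.single_apply]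

/-- The capacitance determinant of an invertible block matrix coupled through a single pair of
entries does not vanish. -/
theorem capacitance_ne_zero {A : Matrix p p K} {B : Matrix q q K} {a : p} {b : q} {β : K}
    (hA : IsUnit A) (hB : IsUnit B)
    (hM : IsUnit (fromBlocks A (single a b β) (single b a β) B)) :
    1 - β ^ 2 * (A⁻¹ a a * B⁻¹ b b) ≠ 0 := by
  rw [isUnit_iff_isUnit_det] at hA hB
  intro h
  have hzero : Sum.elim (A⁻¹ *ᵥ Pi.single a 1) (-(β * A⁻¹ a a) • B⁻¹ *ᵥ Pi.single b 1) = 0 := by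
    apply mulVec_injective_of_isUnit hM
    simp only [mulVec_zero]
    rw [fromBlocks_single_mulVec_elim, mulVec_smul, mulVec_mulVec, mulVec_mulVec,
      mul_nonsing_inv _ hA, mul_nonsing_inv _ hB, one_mulVec, one_mulVec]
    ext (i | i)
    · simp only [mulVec_single_one, Sum.elim_inl, Pi.add_apply, Pi.smul_apply, col_apply,
        smul_eq_mul, Pi.zero_apply]
      linear_combination (Pi.single a 1 : p → K) i * h
    · simp
  have hcol : A⁻¹ *ᵥ Pi.single a 1 = 0 := by
    ext i
    exact congrFun hzero (Sum.inl i)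
  have hone : A *ᵥ (A⁻¹ *ᵥ Pi.single a 1) = Pi.single a 1 := by
    rw [mulVec_mulVec, mul_nonsing_inv _ hA, one_mulVec]
  rw [hcol, mulVec_zero] at hone
  simpa using congrFun hone a

/-- Top block of a column of the inverse of a block matrix coupled through a single pair of
entries. -/
theorem inv_fromBlocks_single_mulVec_inl {A : Matrix p p K} {B : Matrix q q K} {a : p} {b : q}
    {β : K} (hA : IsUnit A) (hB : IsUnit B)
    (hM : IsUnit (fromBlocks A (single a b β) (single b a β) B)) (c i : p) :
    ((fromBlocks A (single a b β) (single b a β) B)⁻¹ *ᵥ Pi.single (Sum.inl c) 1) (Sum.inl i) =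
      A⁻¹ i c + β ^ 2 * (B⁻¹ b b * A⁻¹ a c) / (1 - β ^ 2 * (A⁻¹ a a * B⁻¹ b b)) * A⁻¹ i a := by
  have hne := capacitance_ne_zero hA hB hM
  have hM' := (isUnit_iff_isUnit_det _).1 hM
  rw [isUnit_iff_isUnit_det] at hA hB
  set D := 1 - β ^ 2 * (A⁻¹ a a * B⁻¹ b b) with hD
  have hsol : (fromBlocks A (single a b β) (single b a β) B)⁻¹ *ᵥ Pi.single (Sum.inl c) 1 =
      Sum.elim (A⁻¹ *ᵥ Pi.single c 1 +
          (β ^ 2 * (B⁻¹ b b * A⁻¹ a c) / D) • A⁻¹ *ᵥ Pi.single a 1)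
        (-(β * A⁻¹ a c / D) • B⁻¹ *ᵥ Pi.single b 1) := by
    apply mulVec_injective_of_isUnit hM
    rw [mulVec_mulVec, mul_nonsing_inv _ hM', one_mulVec, fromBlocks_single_mulVec_elim,
      mulVec_add, mulVec_smul, mulVec_smul, mulVec_mulVec, mulVec_mulVec, mulVec_mulVec,
      mul_nonsing_inv _ hA, mul_nonsing_inv _ hB, one_mulVec, one_mulVec, one_mulVec]
    ext (j | j)
    · simp only [mulVec_single_one, Sum.elim_inl, Pi.add_apply, Pi.smul_apply, col_apply,
        smul_eq_mul]
      have hsingle : (Pi.single (Sum.inl c) 1 : p ⊕ q → K) (Sum.inl j) =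
          (Pi.single c 1 : p → K) j := by
        simp [Pi.single_apply]
      rw [hsingle]
      ring
    · simp only [mulVec_single_one, Sum.elim_inr, Pi.add_apply, Pi.smul_apply, col_apply,
        smul_eq_mul]
      rw [Pi.single_eq_of_ne (by simp)]
      field_simp
      rw [hD]
      ring
  rw [hsol]
  simp

end Matrix

/-- **Lemma 3.3, formula (3.13)**: in the block matrix setup
`T = [[T₁, β e_m e₁ᵀ], [β e₁ e_mᵀ, S]]` with `T` positive definite, for every `t ≥ 0` the
determinant `d(t) = γ(t)δ(t) − 1/β²` of the Woodbury capacitance matrix is nonzero and,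
writing `(T + tI)⁻¹ e₁ = (x(t); z(t))`, one has
`x(t) − (T₁ + tI)⁻¹ e₁ = −(δ(t) ε(t) / d(t)) (T₁ + tI)⁻¹ e_m`. -/
theorem woodbury_top_block
    {m k : ℕ} (hm : 1 ≤ m) (hk : 1 ≤ k)
    (T₁ : Matrix (Fin m) (Fin m) ℝ) (S : Matrix (Fin k) (Fin k) ℝ)
    (hT₁ : T₁.IsSymm) (hS : S.IsSymm)
    (β : ℝ) (hβ : 0 < β)
    (T : Matrix (Fin m ⊕ Fin k) (Fin m ⊕ Fin k) ℝ)
    (hT : T = Matrix.fromBlocks T₁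
      (Matrix.of fun i j => if i = (⟨m - 1, by omega⟩ : Fin m) ∧ j = (⟨0, hk⟩ : Fin k) then β else 0)
      (Matrix.of fun i j => if i = (⟨0, hk⟩ : Fin k) ∧ j = (⟨m - 1, by omega⟩ : Fin m) then β else 0)
      S)
    (hTpd : T.PosDef)
    (γ δ ε d : ℝ → ℝ)
    (hγ : ∀ t, γ t = (T₁ + t • 1)⁻¹ ⟨m - 1, by omega⟩ ⟨m - 1, by omega⟩)
    (hδ : ∀ t, δ t = (S + t • 1)⁻¹ ⟨0, hk⟩ ⟨0, hk⟩)
    (hε : ∀ t, ε t = (T₁ + t • 1)⁻¹ ⟨m - 1, by omega⟩ ⟨0, hm⟩)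
    (hd : ∀ t, d t = γ t * δ t - 1 / β ^ 2)
    (t : ℝ) (ht : 0 ≤ t)
    (x : Fin m → ℝ)
    (hx : ∀ i, x i = (T + t • 1)⁻¹.mulVec (Pi.single (Sum.inl ⟨0, hm⟩) 1) (Sum.inl i)) :
    d t ≠ 0 ∧
      x - (T₁ + t • 1)⁻¹.mulVec (Pi.single ⟨0, hm⟩ 1) =
        (-(δ t * ε t / d t)) • (T₁ + t • 1)⁻¹.mulVec (Pi.single ⟨m - 1, by omega⟩ 1) := by
  set a : Fin m := ⟨m - 1, by omega⟩
  set b : Fin k := ⟨0, hk⟩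
  set c : Fin m := ⟨0, hm⟩
  have hblocks : T + t • 1 =
      fromBlocks (T₁ + t • 1) (single a b β) (single b a β) (S + t • 1) := by
    rw [hT, ← fromBlocks_one, fromBlocks_smul, fromBlocks_add]
    congr 1 <;> ext i j <;> simp [single_apply, eq_comm]
  have hpd : (T + t • 1).PosDef := hTpd.add_posSemidef (PosSemidef.one.smul ht)
  rw [hblocks] at hpd
  have hA : IsUnit (T₁ + t • 1) := (hpd.submatrix Sum.inl_injective).isUnit
  have hB : IsUnit (S + t • 1) := (hpd.submatrix Sum.inr_injective).isUnit
  have hne := capacitance_ne_zero hA hB hpd.isUnit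
  have hdt : d t = -(1 - β ^ 2 * ((T₁ + t • 1)⁻¹ a a * (S + t • 1)⁻¹ b b)) / β ^ 2 := by
    rw [hd, hγ, hδ]
    field_simp
    ring
  refine ⟨by rw [hdt]; exact div_ne_zero (neg_ne_zero.2 hne) (by positivity), ?_⟩
  ext i
  rw [Pi.sub_apply, hx, hblocks, inv_fromBlocks_single_mulVec_inl hA hB hpd.isUnit, hdt, hδ, hε]
  simp only [mulVec_single_one, Pi.smul_apply, col_apply, smul_eq_mul]
  field_simp
  ring
end

section
/- In the block matrix setup, for every t ≥ 0 one has γ(t) > 0, δ(t) > 0, and γ(t)δ(t) < 1/β²; moreover γ(t) ≤ γ(0) and δ(t) ≤ δ(0), so that −1/β² ≤ d(t) ≤ γ(0)δ(0) − 1/β² < 0 for all t ≥ 0. -/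
open Matrix

namespace Matrix

variable {n p : Type*} [Fintype n] [DecidableEq n] [Fintype p] [DecidableEq p]

theorem mulVec_inv_col {A : Matrix n n ℝ} (hA : A.PosDef) (i : n) :
    A *ᵥ (A⁻¹).col i = Pi.single i 1 := by
  rw [← mulVec_single_one, mulVec_mulVec, mul_nonsing_inv _ hA.det_pos.ne'.isUnit, one_mulVec]

/-- The diagonal entries of the inverse decrease when a nonnegative multiple of the identity
is added to a positive definite matrix. -/
theorem PosDef.inv_add_smul_one_diag_le {A : Matrix n n ℝ} (hA : A.PosDef) {t : ℝ} (ht : 0 ≤ t)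
    (i : n) : (A + t • 1)⁻¹ i i ≤ A⁻¹ i i := by
  have hB : (A + t • (1 : Matrix n n ℝ)).PosDef :=
    hA.add_posSemidef (PosSemidef.one.smul ht)
  set x := ((A + t • (1 : Matrix n n ℝ))⁻¹).col i with hx
  set y := (A⁻¹).col i
  have hAx : A *ᵥ x = Pi.single i 1 - t • x := by
    have h := mulVec_inv_col hB i
    rw [← hx, add_mulVec, smul_mulVec, one_mulVec] at h
    exact eq_sub_of_add_eq h
  have hAy : A *ᵥ y = Pi.single i 1 := mulVec_inv_col hA i
  have hq := hA.posSemidef.dotProduct_mulVec_nonneg (x - y)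
  have hsymm : y ⬝ᵥ A *ᵥ x = x ⬝ᵥ A *ᵥ y := by
    rw [dotProduct_mulVec, ← mulVec_transpose, dotProduct_comm,
      ← conjTranspose_eq_transpose_of_trivial, hA.isHermitian.eq]
  have hxx : 0 ≤ t * (x ⬝ᵥ x) := mul_nonneg ht (Finset.sum_nonneg fun l _ => mul_self_nonneg (x l))
  rw [star_trivial, mulVec_sub, sub_dotProduct, dotProduct_sub, dotProduct_sub, hsymm, hAx, hAy,
    dotProduct_sub, dotProduct_smul, dotProduct_single_one, dotProduct_single_one,
    smul_eq_mul] at hq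
  have hxi : x i = (A + t • 1)⁻¹ i i := rfl
  have hyi : y i = A⁻¹ i i := rfl
  linarith

/-- If two positive definite blocks coupled through a single entry `β` form a positive definite
matrix, the product of `β ^ 2` and the corresponding diagonal entries of their inverses is less
than one. -/
theorem PosDef.sq_mul_inv_diag_mul_inv_diag_lt_one {A : Matrix n n ℝ} {D : Matrix p p ℝ}
    {i : n} {j : p} {β : ℝ} (hA : A.PosDef) (hD : D.PosDef)
    (hT : (fromBlocks A (single i j β) (single j i β) D).PosDef) :
    β ^ 2 * (A⁻¹ i i * D⁻¹ j j) < 1 := by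
  set c := D⁻¹ j j
  have hcpos : 0 < c := hD.inv.diag_pos
  set u := (A⁻¹).col i
  set w := (D⁻¹).col j
  have hui : u i = A⁻¹ i i := rfl
  have hwj : w j = c := rfl
  have hv : Sum.elim (-(β * c) • u) w ≠ 0 := fun h => hcpos.ne' (congrFun h (Sum.inr j))
  have hq := hT.dotProduct_mulVec_pos hv
  rw [star_trivial, fromBlocks_mulVec, sumElim_dotProduct_sumElim] at hq
  rw [Sum.elim_comp_inl, Sum.elim_comp_inr, mulVec_smul, mulVec_smul, mulVec_inv_col hA,
    mulVec_inv_col hD, single_mulVec, single_mulVec, ← Pi.single, ← Pi.single] at hq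
  simp only [dotProduct_add, dotProduct_smul, dotProduct_single, smul_eq_mul,
    hui, hwj] at hq
  have hfac : 0 < c * (1 - β ^ 2 * (A⁻¹ i i * c)) := by linarith
  exact sub_pos.mp (pos_of_mul_pos_right hfac hcpos.le)

end Matrix

/-- **From the proof of Lemma 3.4**: in the block matrix setup
`T = [[T₁, β e_m e₁ᵀ], [β e₁ e_mᵀ, S]]` with `T` positive definite, for every `t ≥ 0` one
has `γ(t) > 0`, `δ(t) > 0`, `γ(t)δ(t) < 1/β²`, `γ(t) ≤ γ(0)`, `δ(t) ≤ δ(0)`, and hence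
`−1/β² ≤ d(t) ≤ γ(0)δ(0) − 1/β² < 0`. -/
theorem capacitance_determinant_bounds
    {m k : ℕ} (hm : 1 ≤ m) (hk : 1 ≤ k)
    (T₁ : Matrix (Fin m) (Fin m) ℝ) (S : Matrix (Fin k) (Fin k) ℝ)
    (hT₁ : T₁.IsSymm) (hS : S.IsSymm)
    (β : ℝ) (hβ : 0 < β)
    (T : Matrix (Fin m ⊕ Fin k) (Fin m ⊕ Fin k) ℝ)
    (hT : T = Matrix.fromBlocks T₁
      (Matrix.of fun i j => if i = (⟨m - 1, by omega⟩ : Fin m) ∧ j = (⟨0, hk⟩ : Fin k) then β else 0)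
      (Matrix.of fun i j => if i = (⟨0, hk⟩ : Fin k) ∧ j = (⟨m - 1, by omega⟩ : Fin m) then β else 0)
      S)
    (hTpd : T.PosDef)
    (γ δ ε d : ℝ → ℝ)
    (hγ : ∀ t, γ t = (T₁ + t • 1)⁻¹ ⟨m - 1, by omega⟩ ⟨m - 1, by omega⟩)
    (hδ : ∀ t, δ t = (S + t • 1)⁻¹ ⟨0, hk⟩ ⟨0, hk⟩)
    (hε : ∀ t, ε t = (T₁ + t • 1)⁻¹ ⟨m - 1, by omega⟩ ⟨0, hm⟩)
    (hd : ∀ t, d t = γ t * δ t - 1 / β ^ 2)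
    (t : ℝ) (ht : 0 ≤ t) :
    0 < γ t ∧ 0 < δ t ∧ γ t * δ t < 1 / β ^ 2 ∧
      γ t ≤ γ 0 ∧ δ t ≤ δ 0 ∧
      -(1 / β ^ 2) ≤ d t ∧ d t ≤ γ 0 * δ 0 - 1 / β ^ 2 ∧ γ 0 * δ 0 - 1 / β ^ 2 < 0 := by
  have hT' : T = fromBlocks T₁ (single ⟨m - 1, by omega⟩ ⟨0, hk⟩ β)
      (single ⟨0, hk⟩ ⟨m - 1, by omega⟩ β) S := by
    rw [hT]
    congr 1 <;> ext i j <;> simp [single_apply, eq_comm]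
  rw [hT'] at hTpd
  have hA : T₁.PosDef := hTpd.submatrix Sum.inl_injective
  have hD : S.PosDef := hTpd.submatrix Sum.inr_injective
  have hlt := PosDef.sq_mul_inv_diag_mul_inv_diag_lt_one hA hD hTpd
  have hγpos : 0 < γ t := by
    rw [hγ]
    exact (hA.add_posSemidef (PosSemidef.one.smul ht)).inv.diag_pos
  have hδpos : 0 < δ t := by
    rw [hδ]
    exact (hD.add_posSemidef (PosSemidef.one.smul ht)).inv.diag_pos
  have hγle : γ t ≤ γ 0 := by
    simpa [hγ] using hA.inv_add_smul_one_diag_le ht _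
  have hδle : δ t ≤ δ 0 := by
    simpa [hδ] using hD.inv_add_smul_one_diag_le ht _
  have hlt0 : γ 0 * δ 0 < 1 / β ^ 2 := by
    rw [lt_div_iff₀' (by positivity)]
    simpa [hγ, hδ] using hlt
  have hmul : γ t * δ t ≤ γ 0 * δ 0 := mul_le_mul hγle hδle hδpos.le (hγpos.le.trans hγle)
  have hprod : 0 < γ t * δ t := mul_pos hγpos hδpos
  rw [hd]
  exact ⟨hγpos, hδpos, hmul.trans_lt hlt0, hγle, hδle, by linarith, by linarith, by linarith⟩
end

section
/- In the block matrix setup, assume additionally that T₁ is tridiagonal ((T₁)_{ij} = 0 for |i−j| > 1) with positive subdiagonal entries (T₁)_{i+1,i} > 0 for i = 1,…,m−1, and let μ be a positive Borel measure on [0,∞) with ∫_{[0,∞)} 1/(1+t) dμ(t) < ∞. Define f₁(z) := ∫_{[0,∞)} (−δ(t) ε(t) / d(t)) · 1/(z+t) dμ(t) for z > 0. Then (−1)^{m+1} f₁ is a Stieltjes function: there exists a positive Borel measure ν on [0,∞) with ∫_{[0,∞)} 1/(1+t) dν(t) < ∞ such that (−1)^{m+1} f₁(z) = ∫_{[0,∞)}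 1/(z+t) dν(t) for all z > 0. In particular, f₁ has constant sign on (0,∞) and |f₁| is monotonically decreasing on (0,∞). -/
open MeasureTheory Matrix

/-- The entries of the resolvent `(A + t)⁻¹` are measurable functions of `t`. -/
lemma measurable_inv_add_smul_one_apply {n : Type*} [Fintype n] [DecidableEq n]
    (A : Matrix n n ℝ) (i j : n) : Measurable fun t : ℝ => (A + t • 1)⁻¹ i j := by
  have hc : Continuous fun t : ℝ => A + t • (1 : Matrix n n ℝ) := by fun_prop
  simp only [Matrix.inv_def, Ring.inverse_eq_inv', Matrix.smul_apply, smul_eq_mul]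
  exact hc.matrix_det.measurable.inv.mul (hc.matrix_adjugate.matrix_elem i j).measurable

lemma Matrix.PosDef.add_smul_one {n : Type*} [Fintype n] [DecidableEq n]
    {A : Matrix n n ℝ} (hA : A.PosDef) {t : ℝ} (ht : 0 ≤ t) : (A + t • 1).PosDef :=
  hA.add_posSemidef (PosSemidef.one.smul ht)

/-- The entries of the resolvent of a positive definite matrix are bounded on `[0, ∞)`. -/
lemma Matrix.PosDef.abs_inv_add_smul_one_apply_le {n : Type*} [Fintype n] [DecidableEq n]
    {A : Matrix n n ℝ} (hA : A.PosDef) {t : ℝ} (ht : 0 ≤ t) (i j : n) :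
    |(A + t • 1)⁻¹ j i| ≤ (A⁻¹ i i + A⁻¹ j j) / 2 := by
  set v := (A + t • 1)⁻¹ *ᵥ Pi.single i 1 with hv
  set u := A⁻¹ *ᵥ Pi.single i 1 with hu
  set q := A⁻¹ *ᵥ Pi.single j 1 with hq
  have hsymm : ∀ x y : n → ℝ, x ⬝ᵥ A *ᵥ y = y ⬝ᵥ A *ᵥ x := fun x y => by
    have hAt : Aᵀ = A := by simpa using hA.isHermitian.eq
    rw [dotProduct_mulVec, ← mulVec_transpose, hAt, dotProduct_comm]
  have hAunit : IsUnit A.det := hA.det_pos.ne'.isUnit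
  have hMunit : IsUnit (A + t • 1).det := (hA.add_smul_one ht).det_pos.ne'.isUnit
  have hAu : A *ᵥ u = Pi.single i 1 := by
    rw [hu, mulVec_mulVec, mul_nonsing_inv _ hAunit, one_mulVec]
  have hAq : A *ᵥ q = Pi.single j 1 := by
    rw [hq, mulVec_mulVec, mul_nonsing_inv _ hAunit, one_mulVec]
  have hMv : A *ᵥ v + t • v = Pi.single i 1 := by
    have : (A + t • 1) *ᵥ v = Pi.single i 1 := by
      rw [hv, mulVec_mulVec, mul_nonsing_inv _ hMunit, one_mulVec]
    simpa [add_mulVec, smul_mulVec] using this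
  have hvv : v ⬝ᵥ A *ᵥ v + t * (v ⬝ᵥ v) = v i := by
    simpa [dotProduct_add] using congrArg (v ⬝ᵥ ·) hMv
  have hnonneg : ∀ x : n → ℝ, 0 ≤ x ⬝ᵥ A *ᵥ x := fun x => by
    simpa using hA.posSemidef.dotProduct_mulVec_nonneg x
  have hvsq : 0 ≤ t * (v ⬝ᵥ v) :=
    mul_nonneg ht (by simpa using dotProduct_star_self_nonneg v)
  have hdiag := hnonneg (u - v)
  have hplus := hnonneg (q + v)
  have hminus := hnonneg (q - v)
  simp only [mulVec_sub, mulVec_add, dotProduct_sub, sub_dotProduct, dotProduct_add,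
    add_dotProduct, hsymm u v, hsymm q v, hAu, hAq, dotProduct_single, mul_one, Pi.sub_apply,
    Pi.add_apply] at hdiag hplus hminus
  have hvj : v j = (A + t • 1)⁻¹ j i := by simp [hv]
  have hui : u i = A⁻¹ i i := by simp [hu]
  have hqj : q j = A⁻¹ j j := by simp [hq]
  rw [← hvj, ← hui, ← hqj, abs_le]
  constructor <;> linarith

/-- The corner entry of the inverse of a tridiagonal matrix of size `n + 1` with positive
determinant and positive subdiagonal has sign `(-1) ^ n`. -/
lemma neg_one_pow_mul_inv_last_zero_pos {n : ℕ} (A : Matrix (Fin (n + 1)) (Fin (n + 1)) ℝ)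
    (hdet : 0 < A.det) (hlow : ∀ i j : Fin (n + 1), (j : ℕ) + 1 < (i : ℕ) → A i j = 0)
    (hsub : ∀ i : Fin n, 0 < A i.succ i.castSucc) :
    0 < (-1 : ℝ) ^ n * A⁻¹ (Fin.last n) 0 := by
  have htri : (A.submatrix Fin.succ Fin.castSucc).IsUpperTriangular := fun i j hij =>
    hlow _ _ (by simpa using hij)
  have hadj : A.adjugate (Fin.last n) 0 = (-1) ^ n * ∏ i : Fin n, A i.succ i.castSucc := by
    rw [adjugate_fin_succ_eq_det_submatrix]
    simp only [Fin.succAbove_last, Fin.succAbove_zero]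
    rw [det_of_isUpperTriangular htri]
    simp
  rw [Matrix.inv_def, Ring.inverse_eq_inv', Matrix.smul_apply, smul_eq_mul, hadj]
  have hsq : (-1 : ℝ) ^ n * (-1) ^ n = 1 := by rw [← mul_pow]; simp
  have hprod : 0 < ∏ i : Fin n, A i.succ i.castSucc := Finset.prod_pos fun i _ => hsub i
  calc (0 : ℝ) < A.det⁻¹ * ∏ i : Fin n, A i.succ i.castSucc := mul_pos (inv_pos.2 hdet) hprod
    _ = ((-1) ^ n * (-1) ^ n) * (A.det⁻¹ * ∏ i : Fin n, A i.succ i.castSucc) := by rw [hsq, one_mul]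
    _ = _ := by ring

/-- Column `Sum.inl j` of the inverse of a block matrix whose off-diagonal blocks have a single
nonzero entry `β`. -/
lemma inv_fromBlocks_single_apply {p q : Type*} [Fintype p] [DecidableEq p] [Fintype q]
    [DecidableEq q] (A : Matrix p p ℝ) (B : Matrix q q ℝ) (a : p) (b : q) (β : ℝ)
    (hA : IsUnit A.det) (hB : IsUnit B.det)
    (hM : IsUnit (fromBlocks A (single a b β) (single b a β) B).det) (j : p) :
    (fromBlocks A (single a b β) (single b a β) B)⁻¹ (Sum.inl a) (Sum.inl j) *
        (1 - β ^ 2 * (A⁻¹ a a * B⁻¹ b b)) = A⁻¹ a j ∧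
      (fromBlocks A (single a b β) (single b a β) B)⁻¹ (Sum.inr b) (Sum.inl j) =
        -β * B⁻¹ b b *
          (fromBlocks A (single a b β) (single b a β) B)⁻¹ (Sum.inl a) (Sum.inl j) := by
  set M := fromBlocks A (single a b β) (single b a β) B with hMdef
  set v := M⁻¹ *ᵥ Pi.single (Sum.inl j) 1 with hv
  have hMv : M *ᵥ v = Pi.single (Sum.inl j) 1 := by
    rw [hv, mulVec_mulVec, mul_nonsing_inv _ hM, one_mulVec]
  have hva : v (Sum.inl a) = M⁻¹ (Sum.inl a) (Sum.inl j) := by simp [hv]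
  have hvb : v (Sum.inr b) = M⁻¹ (Sum.inr b) (Sum.inl j) := by simp [hv]
  rw [hMdef, fromBlocks_mulVec] at hMv
  have htop : A *ᵥ (v ∘ Sum.inl) + (β * v (Sum.inr b)) • Pi.single a 1 = Pi.single j 1 := by
    funext i
    have := congrFun hMv (Sum.inl i)
    simpa [single_mulVec, Pi.single_apply, Function.update_apply] using this
  have hbot : B *ᵥ (v ∘ Sum.inr) + (β * v (Sum.inl a)) • Pi.single b 1 = 0 := by
    funext i
    have := congrFun hMv (Sum.inr i)
    simpa [single_mulVec, Pi.single_apply, Function.update_apply, add_comm] using this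
  have htop' := congrFun (congrArg (A⁻¹ *ᵥ ·) htop) a
  have hbot' := congrFun (congrArg (B⁻¹ *ᵥ ·) hbot) b
  simp only [mulVec_add, mulVec_mulVec, nonsing_inv_mul _ hA, nonsing_inv_mul _ hB, one_mulVec,
    mulVec_smul, mulVec_zero, Pi.add_apply, Pi.smul_apply, mulVec_single_one, col_apply,
    Function.comp_apply, smul_eq_mul, Pi.zero_apply] at htop' hbot'
  rw [← hva, ← hvb]
  have hy : v (Sum.inr b) = -β * B⁻¹ b b * v (Sum.inl a) := by linarith
  refine ⟨?_, hy⟩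
  rw [hy] at htop'
  linarith

/-- The Stieltjes transform of a measure that integrates `1 / (1 + t)` converges on `(0, ∞)`. -/
lemma integrableOn_inv_add_of_integrableOn_inv_one_add {ν : Measure ℝ}
    (hν : IntegrableOn (fun t => (1 + t)⁻¹) (Set.Ici 0) ν) {z : ℝ} (hz : 0 < z) :
    IntegrableOn (fun t => (z + t)⁻¹) (Set.Ici 0) ν := by
  refine Integrable.mono' (hν.const_mul (1 + z⁻¹))
    (by fun_prop : Measurable fun t : ℝ => (z + t)⁻¹).aestronglyMeasurable ?_
  filter_upwards [ae_restrict_mem measurableSet_Ici] with t ht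
  have ht' : 0 ≤ t := ht
  rw [Real.norm_of_nonneg (by positivity), ← div_eq_mul_inv, inv_le_comm₀ (by positivity)
    (by positivity), inv_div, div_le_iff₀ (by positivity)]
  have : z * z⁻¹ = 1 := mul_inv_cancel₀ hz.ne'
  have : 0 ≤ t * z⁻¹ := by positivity
  nlinarith

/-- A bounded nonnegative weight turns a Stieltjes measure into a Stieltjes measure. -/
lemma exists_stieltjes_measure_of_bounded_weight {μ : Measure ℝ}
    (hμ : IntegrableOn (fun t => (1 + t)⁻¹) (Set.Ici 0) μ) {w : ℝ → ℝ} (hw : Measurable w)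
    {C : ℝ} (hw0 : ∀ t, 0 ≤ t → 0 ≤ w t) (hwC : ∀ t, 0 ≤ t → w t ≤ C) :
    ∃ ν : Measure ℝ, IntegrableOn (fun t => (1 + t)⁻¹) (Set.Ici 0) ν ∧
      ∀ z : ℝ, 0 < z →
        ∫ t in Set.Ici (0 : ℝ), w t * (z + t)⁻¹ ∂μ = ∫ t in Set.Ici (0 : ℝ), (z + t)⁻¹ ∂ν := by
  have hw' : Measurable fun t => (w t).toNNReal := hw.real_toNNReal
  refine ⟨μ.withDensity fun t => ((w t).toNNReal : ENNReal), ?_, fun z hz => ?_⟩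
  · rw [IntegrableOn, restrict_withDensity measurableSet_Ici,
      integrable_withDensity_iff_integrable_smul hw']
    refine Integrable.mono' (hμ.const_mul C) ?_ ?_
    · exact (hw'.smul (by fun_prop : Measurable fun t : ℝ => (1 + t)⁻¹)).aestronglyMeasurable
    · filter_upwards [ae_restrict_mem measurableSet_Ici] with t ht
      have ht' : 0 ≤ t := ht
      have hinv : 0 ≤ (1 + t)⁻¹ := by positivity
      rw [NNReal.smul_def, Real.coe_toNNReal _ (hw0 t ht'), smul_eq_mul,
        Real.norm_of_nonneg (mul_nonneg (hw0 t ht') hinv)]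
      exact mul_le_mul_of_nonneg_right (hwC t ht') hinv
  · rw [restrict_withDensity measurableSet_Ici, integral_withDensity_eq_integral_smul hw']
    refine setIntegral_congr_fun measurableSet_Ici fun t ht => ?_
    simp only [NNReal.smul_def, Real.coe_toNNReal _ (hw0 t ht), smul_eq_mul]

lemma setIntegral_inv_add_nonneg (ν : Measure ℝ) {z : ℝ} (hz : 0 < z) :
    0 ≤ ∫ t in Set.Ici (0 : ℝ), (z + t)⁻¹ ∂ν :=
  setIntegral_nonneg measurableSet_Ici fun _ ht => inv_nonneg.2 (add_nonneg hz.le ht)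

lemma setIntegral_inv_add_antitone {ν : Measure ℝ}
    (hν : IntegrableOn (fun t => (1 + t)⁻¹) (Set.Ici 0) ν) {z₁ z₂ : ℝ} (hz₁ : 0 < z₁)
    (hz : z₁ ≤ z₂) :
    ∫ t in Set.Ici (0 : ℝ), (z₂ + t)⁻¹ ∂ν ≤ ∫ t in Set.Ici (0 : ℝ), (z₁ + t)⁻¹ ∂ν :=
  setIntegral_mono_on (integrableOn_inv_add_of_integrableOn_inv_one_add hν (hz₁.trans_le hz))
    (integrableOn_inv_add_of_integrableOn_inv_one_add hν hz₁) measurableSet_Ici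
    fun _ ht => inv_anti₀ (add_pos_of_pos_of_nonneg hz₁ ht) (by gcongr)

/-- **Lemma 3.4 (first part)**: in the block matrix setup
`T = [[T₁, β e_m e₁ᵀ], [β e₁ e_mᵀ, S]]` with `T` positive definite and `T₁` tridiagonal
with positive subdiagonal entries, and for a positive Borel measure `μ` on `[0,∞)` with
`∫ 1/(1+t) dμ(t) < ∞`, the function
`f₁(z) = ∫ (−δ(t)ε(t)/d(t)) · 1/(z+t) dμ(t)` is such that `(−1)^{m+1} f₁` is a Stieltjes
function; in particular `f₁` has constant sign on `(0,∞)` and `|f₁|` is monotonically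
decreasing on `(0,∞)`. -/
theorem f1_sign_flip_stieltjes
    {m k : ℕ} (hm : 1 ≤ m) (hk : 1 ≤ k)
    (T₁ : Matrix (Fin m) (Fin m) ℝ) (S : Matrix (Fin k) (Fin k) ℝ)
    (hT₁ : T₁.IsSymm) (hS : S.IsSymm)
    (htri : ∀ i j : Fin m, ((i : ℕ) + 1 < (j : ℕ) ∨ (j : ℕ) + 1 < (i : ℕ)) → T₁ i j = 0)
    (hsub : ∀ i : Fin (m - 1),
      0 < T₁ ⟨(i : ℕ) + 1, by have := i.isLt; omega⟩ ⟨(i : ℕ), by have := i.isLt; omega⟩)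
    (β : ℝ) (hβ : 0 < β)
    (T : Matrix (Fin m ⊕ Fin k) (Fin m ⊕ Fin k) ℝ)
    (hT : T = Matrix.fromBlocks T₁
      (Matrix.of fun i j => if i = (⟨m - 1, by omega⟩ : Fin m) ∧ j = (⟨0, hk⟩ : Fin k) then β else 0)
      (Matrix.of fun i j => if i = (⟨0, hk⟩ : Fin k) ∧ j = (⟨m - 1, by omega⟩ : Fin m) then β else 0)
      S)
    (hTpd : T.PosDef)
    (γ δ ε d : ℝ → ℝ)
    (hγ : ∀ t, γ t = (T₁ + t • 1)⁻¹ ⟨m - 1, by omega⟩ ⟨m - 1, by omega⟩)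
    (hδ : ∀ t, δ t = (S + t • 1)⁻¹ ⟨0, hk⟩ ⟨0, hk⟩)
    (hε : ∀ t, ε t = (T₁ + t • 1)⁻¹ ⟨m - 1, by omega⟩ ⟨0, hm⟩)
    (hd : ∀ t, d t = γ t * δ t - 1 / β ^ 2)
    (μ : Measure ℝ)
    (hμ : MeasureTheory.IntegrableOn (fun t => (1 + t)⁻¹) (Set.Ici 0) μ)
    (f₁ : ℝ → ℝ)
    (hf₁ : ∀ z : ℝ, 0 < z →
      f₁ z = ∫ t in Set.Ici (0 : ℝ), (-(δ t * ε t / d t)) * (z + t)⁻¹ ∂μ) :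
    (∃ ν : Measure ℝ,
      MeasureTheory.IntegrableOn (fun t => (1 + t)⁻¹) (Set.Ici 0) ν ∧
      ∀ z : ℝ, 0 < z →
        (-1 : ℝ) ^ (m + 1) * f₁ z = ∫ t in Set.Ici (0 : ℝ), (z + t)⁻¹ ∂ν) ∧
    ((∀ z : ℝ, 0 < z → 0 ≤ f₁ z) ∨ (∀ z : ℝ, 0 < z → f₁ z ≤ 0)) ∧
    (∀ z₁ z₂ : ℝ, 0 < z₁ → z₁ ≤ z₂ → |f₁ z₂| ≤ |f₁ z₁|) := by
  obtain ⟨n, rfl⟩ : ∃ n, m = n + 1 := ⟨m - 1, by omega⟩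
  set a : Fin (n + 1) := ⟨n + 1 - 1, by omega⟩
  set b : Fin k := ⟨0, hk⟩
  have hTs : T = fromBlocks T₁ (single a b β) (single b a β) S := by
    rw [hT]
    congr 1 <;> ext i j <;> simp [single_apply, eq_comm]
  have hT₁pd : T₁.PosDef := by
    have := hTpd.submatrix (Sum.inl_injective (α := Fin (n + 1)) (β := Fin k))
    rwa [hTs] at this
  have hSpd : S.PosDef := by
    have := hTpd.submatrix (Sum.inr_injective (α := Fin (n + 1)) (β := Fin k))
    rwa [hTs] at this
  have hTt : ∀ t : ℝ, T + t • 1 =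
      fromBlocks (T₁ + t • 1) (single a b β) (single b a β) (S + t • 1) := fun t => by
    rw [hTs, ← fromBlocks_one, fromBlocks_smul, fromBlocks_add]
    simp
  set w : ℝ → ℝ := fun t => (-1) ^ (n + 1 + 1) * (-(δ t * ε t / d t)) with hw
  have hδpos : ∀ t, 0 ≤ t → 0 < δ t := fun t ht => by
    rw [hδ]; exact (hSpd.add_smul_one ht).inv.diag_pos
  have hεpos : ∀ t, 0 ≤ t → 0 < (-1) ^ n * ε t := fun t ht => by
    rw [hε]
    refine neg_one_pow_mul_inv_last_zero_pos _ (hT₁pd.add_smul_one ht).det_pos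
      (fun i j hij => ?_) fun i => ?_
    · have hne : i ≠ j := fun h => by rw [h] at hij; omega
      simp [htri i j (Or.inr hij), hne]
    · have hne : i.succ ≠ i.castSucc := Fin.castSucc_lt_succ.ne'
      rw [Matrix.add_apply, Matrix.smul_apply, one_apply_ne hne, smul_zero, add_zero]
      exact hsub i
  have hcol : ∀ t, 0 ≤ t → ∀ j,
      (T + t • 1)⁻¹ (Sum.inl a) (Sum.inl j) * (1 - β ^ 2 * (γ t * δ t)) =
          (T₁ + t • 1)⁻¹ a j ∧
        (T + t • 1)⁻¹ (Sum.inr b) (Sum.inl j) =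
          -β * δ t * (T + t • 1)⁻¹ (Sum.inl a) (Sum.inl j) := fun t ht j => by
    have hdet := (hTpd.add_smul_one ht).det_pos.ne'.isUnit
    rw [hTt] at hdet ⊢
    rw [hγ, hδ]
    exact inv_fromBlocks_single_apply _ _ a b β (hT₁pd.add_smul_one ht).det_pos.ne'.isUnit
      (hSpd.add_smul_one ht).det_pos.ne'.isUnit hdet j
  have hdenom : ∀ t, 0 ≤ t → 0 < 1 - β ^ 2 * (γ t * δ t) := fun t ht => by
    have hpos : 0 < (T₁ + t • 1)⁻¹ a a := (hT₁pd.add_smul_one ht).inv.diag_pos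
    rw [← (hcol t ht a).1] at hpos
    exact pos_of_mul_pos_right hpos (hTpd.add_smul_one ht).inv.diag_pos.le
  have hdeq : ∀ t, d t = -((1 - β ^ 2 * (γ t * δ t)) / β ^ 2) := fun t => by
    rw [hd]; field_simp; ring
  have hdneg : ∀ t, 0 ≤ t → d t < 0 := fun t ht => by
    rw [hdeq]; exact neg_neg_of_pos (div_pos (hdenom t ht) (by positivity))
  have hw0 : ∀ t, 0 ≤ t → 0 ≤ w t := fun t ht => by
    have : w t = δ t * ((-1) ^ n * ε t) / (-d t) := by
      simp only [hw, pow_succ]; rw [div_neg]; ring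
    rw [this]
    exact (div_pos (mul_pos (hδpos t ht) (hεpos t ht)) (neg_pos.2 (hdneg t ht))).le
  have hwabs : ∀ t, 0 ≤ t →
      w t ≤ β * ((T⁻¹ (Sum.inl 0) (Sum.inl 0) + T⁻¹ (Sum.inr b) (Sum.inr b)) / 2) := fun t ht => by
    obtain ⟨hx, hy⟩ := hcol t ht 0
    have hε' : ε t = (T₁ + t • 1)⁻¹ a 0 := hε t
    have hval : -(δ t * ε t / d t) = -β * (T + t • 1)⁻¹ (Sum.inr b) (Sum.inl 0) := by
      have hne := (hdenom t ht).ne'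
      rw [hy, hε', ← hx, hdeq]
      generalize 1 - β ^ 2 * (γ t * δ t) = D at hne
      field_simp
    calc w t ≤ |w t| := le_abs_self _
      _ = β * |(T + t • 1)⁻¹ (Sum.inr b) (Sum.inl 0)| := by
        simp only [hw, hval, abs_mul, abs_pow, abs_neg, abs_one, one_pow, one_mul, abs_of_pos hβ]
      _ ≤ _ := mul_le_mul_of_nonneg_left (hTpd.abs_inv_add_smul_one_apply_le ht _ _) hβ.le
  have hwmeas : Measurable w := by
    have hγm : Measurable γ := by
      rw [funext hγ]; exact measurable_inv_add_smul_one_apply _ _ _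
    have hδm : Measurable δ := by
      rw [funext hδ]; exact measurable_inv_add_smul_one_apply _ _ _
    have hεm : Measurable ε := by
      rw [funext hε]; exact measurable_inv_add_smul_one_apply _ _ _
    have hdm : Measurable d := by
      rw [funext hd]; fun_prop
    fun_prop
  obtain ⟨ν, hν, hνw⟩ := exists_stieltjes_measure_of_bounded_weight hμ hwmeas hw0 hwabs
  have hrep : ∀ z : ℝ, 0 < z →
      (-1 : ℝ) ^ (n + 1 + 1) * f₁ z = ∫ t in Set.Ici (0 : ℝ), (z + t)⁻¹ ∂ν := fun z hz => by
    rw [hf₁ z hz, ← hνw z hz, ← integral_const_mul]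
    simp only [hw, mul_assoc]
  have habs : ∀ z : ℝ, 0 < z → |f₁ z| = ∫ t in Set.Ici (0 : ℝ), (z + t)⁻¹ ∂ν := fun z hz => by
    rw [← abs_of_nonneg (setIntegral_inv_add_nonneg ν hz), ← hrep z hz, abs_mul]
    simp
  refine ⟨⟨ν, hν, hrep⟩, ?_, fun z₁ z₂ hz₁ hz => ?_⟩
  · rcases neg_one_pow_eq_or ℝ (n + 1 + 1) with hs | hs
    · left; intro z hz
      have := setIntegral_inv_add_nonneg ν hz
      rw [← hrep z hz, hs] at this
      linarith
    · right; intro z hz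
      have := setIntegral_inv_add_nonneg ν hz
      rw [← hrep z hz, hs] at this
      linarith
  · rw [habs z₁ hz₁, habs z₂ (hz₁.trans_le hz)]
    exact setIntegral_inv_add_antitone hν hz₁ hz
end
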